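/- arXiv:1102.5774 — 2 statements merged into one kernel-verified Lean document; each statement's English description precedes it below -/
import Mathlib

section
/- Let u ∈ bUSC([0,T]×ℝⁿ) be a viscosity subsolution of ∂ₜu − F(t,x,u,Du,D²u) = 0 on (0,T)×ℝⁿ, where F is continuous, degenerate elliptic, and proper with constant γ ≥ 0 (i.e. γ(r−s) ≤ F(t,x,s,p,X) − F(t,x,r,p,X) for s ≤ r), and F is uniformly continuous in u on compacts. Extend u to t = T by u(T,x) := limsup_{t↑T, y→x} u(t,y). If φ is a C² test function and u − φ has a strict maximum over [0,T]×ℝⁿ at (T, x̄), then ∂ₜφ(T,x̄) − F(T, x̄, u(T,x̄), Dφ(T,x̄), D²φ(T,x̄)) ≤ 0. -/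
open Set Filter

variable {n : ℕ}

/-- Time derivative `∂ₜφ` of a function on `ℝ × ℝⁿ`. -/
noncomputable def ptDeriv (φ : ℝ × EuclideanSpace ℝ (Fin n) → ℝ)
    (p : ℝ × EuclideanSpace ℝ (Fin n)) : ℝ :=
  fderiv ℝ φ p (1, 0)

/-- Spatial gradient `Dφ` of a function on `ℝ × ℝⁿ`. -/
noncomputable def pxGrad (φ : ℝ × EuclideanSpace ℝ (Fin n) → ℝ)
    (p : ℝ × EuclideanSpace ℝ (Fin n)) : EuclideanSpace ℝ (Fin n) :=
  (EuclideanSpace.equiv (Fin n) ℝ).symm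
    (fun i => fderiv ℝ φ p (0, EuclideanSpace.single i 1))

/-- Spatial Hessian `D²φ` of a function on `ℝ × ℝⁿ`, as a matrix. -/
noncomputable def pxHess (φ : ℝ × EuclideanSpace ℝ (Fin n) → ℝ)
    (p : ℝ × EuclideanSpace ℝ (Fin n)) : Matrix (Fin n) (Fin n) ℝ :=
  fun i j => fderiv ℝ (fun q => fderiv ℝ φ q (0, EuclideanSpace.single j 1)) p
    (0, EuclideanSpace.single i 1)

theorem aux_fderiv (φ : ℝ × EuclideanSpace ℝ (Fin n) → ℝ) (hφ : ContDiff ℝ 2 φ)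
    (c0 c1 c2 t0 : ℝ) (p v : ℝ × EuclideanSpace ℝ (Fin n)) :
    fderiv ℝ (fun p : ℝ × EuclideanSpace ℝ (Fin n) =>
      φ p + (c0 + c1 * (p.1 - t0) + c2 * (p.1 - t0) ^ 2)) p v
      = fderiv ℝ φ p v + (c1 + 2 * c2 * (p.1 - t0)) * v.1 := by
  have h1 : HasFDerivAt φ (fderiv ℝ φ p) p :=
    ((hφ.differentiable (by norm_num)) p).hasFDerivAt
  have h2 : HasFDerivAt (fun p : ℝ × EuclideanSpace ℝ (Fin n) => p.1)
    (ContinuousLinearMap.fst ℝ ℝ (EuclideanSpace ℝ (Fin n))) p := hasFDerivAt_fst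
  have h3 : HasDerivAt (fun t : ℝ => c0 + c1 * (t - t0) + c2 * (t - t0) ^ 2)
      (c1 + 2 * c2 * (p.1 - t0)) p.1 := by
    have h := (((hasDerivAt_id p.1).sub_const t0).const_mul c1).const_add c0 |>.add
      ((((hasDerivAt_id p.1).sub_const t0).pow 2).const_mul c2)
    refine h.congr_deriv ?_
    simp
    ring
  have h4 := h1.add (h3.comp_hasFDerivAt p h2)
  have h5 := h4.fderiv
  have h6 : fderiv ℝ (fun p : ℝ × EuclideanSpace ℝ (Fin n) =>
      φ p + (c0 + c1 * (p.1 - t0) + c2 * (p.1 - t0) ^ 2)) p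
      = fderiv ℝ φ p + (c1 + 2 * c2 * (p.1 - t0)) •
        ContinuousLinearMap.fst ℝ ℝ (EuclideanSpace ℝ (Fin n)) := h5
  rw [h6]
  simp

theorem aux_cont_t (φ : ℝ × EuclideanSpace ℝ (Fin n) → ℝ) (hφ : ContDiff ℝ 2 φ) :
    Continuous (ptDeriv φ) := by
  have h := hφ.continuous_fderiv (by norm_num)
  unfold ptDeriv
  fun_prop

theorem aux_cont_x (φ : ℝ × EuclideanSpace ℝ (Fin n) → ℝ) (hφ : ContDiff ℝ 2 φ) :
    Continuous (pxGrad φ) := by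
  have h := hφ.continuous_fderiv (by norm_num)
  unfold pxGrad
  refine (EuclideanSpace.equiv (Fin n) ℝ).symm.continuous.comp ?_
  fun_prop

theorem aux_cont_xx (φ : ℝ × EuclideanSpace ℝ (Fin n) → ℝ) (hφ : ContDiff ℝ 2 φ) :
    Continuous (pxHess φ) := by
  have h : ContDiff ℝ 1 (fderiv ℝ φ) := hφ.fderiv_right (by norm_num)
  refine continuous_pi fun i => continuous_pi fun j => ?_
  have h1 : ContDiff ℝ 1 (fun q => fderiv ℝ φ q (0, EuclideanSpace.single j 1)) :=
    h.clm_apply contDiff_const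
  have h2 := h1.continuous_fderiv (by norm_num)
  show Continuous fun p => fderiv ℝ (fun q => fderiv ℝ φ q (0, EuclideanSpace.single j 1)) p
    (0, EuclideanSpace.single i 1)
  fun_prop

/-- The quadratic majorant of `1/(T-t)` at `t0`. -/
theorem aux_ineq (T t0 t : ℝ) (h0 : t0 < T) (h : t < (T + t0) / 2) :
    1 / (T - t) ≤ 1 / (T - t0) + 1 / (T - t0) ^ 2 * (t - t0)
      + 2 / (T - t0) ^ 3 * (t - t0) ^ 2 := by
  have hs : 0 < T - t0 := by linarith
  have ht : 0 < T - t := by linarith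
  have e : 1 / (T - t0) + 1 / (T - t0) ^ 2 * (t - t0)
      + 2 / (T - t0) ^ 3 * (t - t0) ^ 2 - 1 / (T - t)
      = (t - t0) ^ 2 * (2 * (T - t) - (T - t0)) / ((T - t0) ^ 3 * (T - t)) := by
    field_simp
    ring
  have : 0 ≤ (t - t0) ^ 2 * (2 * (T - t) - (T - t0)) / ((T - t0) ^ 3 * (T - t)) :=
    div_nonneg (mul_nonneg (sq_nonneg _) (by linarith)) (by positivity)
  linarith

/-- If `u` is a bounded USC viscosity subsolution of
`∂ₜu - F(t,x,u,Du,D²u) = 0` on `(0,T)×ℝⁿ` (with `F` continuous, degenerate elliptic,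
proper with constant `γ ≥ 0`, uniformly continuous in `u` on bounded sets), extended
to `t = T` by the USC envelope, and `u - φ` has a strict maximum over `[0,T]×ℝⁿ` at
`(T,x̄)` for a `C²` test function `φ`, then the subsolution inequality holds at `(T,x̄)`. -/
theorem stmt9 (T : ℝ) (hT : 0 < T)
    (F : ℝ → EuclideanSpace ℝ (Fin n) → ℝ → EuclideanSpace ℝ (Fin n) →
      Matrix (Fin n) (Fin n) ℝ → ℝ)
    (hFcont : Continuous (fun q : ℝ × EuclideanSpace ℝ (Fin n) × ℝ ×
      EuclideanSpace ℝ (Fin n) × Matrix (Fin n) (Fin n) ℝ =>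
        F q.1 q.2.1 q.2.2.1 q.2.2.2.1 q.2.2.2.2))
    (hFell : ∀ t x r p (X Y : Matrix (Fin n) (Fin n) ℝ), (Y - X).PosSemidef →
      F t x r p X ≤ F t x r p Y)
    (γ : ℝ) (hγ : 0 ≤ γ)
    (hFproper : ∀ t x p X r s, s ≤ r → γ * (r - s) ≤ F t x s p X - F t x r p X)
    (hFuc : ∀ R > (0:ℝ), ∀ δ > (0:ℝ), ∃ η > (0:ℝ), ∀ t x p X r s,
      |r| ≤ R → |s| ≤ R → ‖p‖ ≤ R → (∀ i j, |X i j| ≤ R) → |r - s| < η →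
      |F t x r p X - F t x s p X| < δ)
    (u : ℝ × EuclideanSpace ℝ (Fin n) → ℝ)
    (hub : ∃ C, ∀ p, |u p| ≤ C)
    (husc : UpperSemicontinuousOn u (Set.Icc 0 T ×ˢ Set.univ))
    (henv : ∀ x, u (T, x) = limsup u (nhdsWithin (T, x) (Set.Ico 0 T ×ˢ Set.univ)))
    (hsub : ∀ ψ : ℝ × EuclideanSpace ℝ (Fin n) → ℝ, ContDiff ℝ 2 ψ →
      ∀ t₀ ∈ Set.Ioo 0 T, ∀ x₀,
      IsLocalMaxOn (fun p => u p - ψ p) (Set.Ioo 0 T ×ˢ Set.univ) (t₀, x₀) →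
      ptDeriv ψ (t₀, x₀) - F t₀ x₀ (u (t₀, x₀)) (pxGrad ψ (t₀, x₀)) (pxHess ψ (t₀, x₀)) ≤ 0)
    (φ : ℝ × EuclideanSpace ℝ (Fin n) → ℝ) (hφ : ContDiff ℝ 2 φ)
    (xbar : EuclideanSpace ℝ (Fin n))
    (hstrict : ∀ p ∈ Set.Icc 0 T ×ˢ (Set.univ : Set (EuclideanSpace ℝ (Fin n))),
      p ≠ (T, xbar) → u p - φ p < u (T, xbar) - φ (T, xbar)) :
    ptDeriv φ (T, xbar) -
      F T xbar (u (T, xbar)) (pxGrad φ (T, xbar)) (pxHess φ (T, xbar)) ≤ 0 := by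
  by_contra hcon
  push Not at hcon
  have hG : Continuous (fun z : (ℝ × EuclideanSpace ℝ (Fin n)) × ℝ =>
      ptDeriv φ z.1 - F z.1.1 z.1.2 z.2 (pxGrad φ z.1) (pxHess φ z.1)) := by
    have h1 := aux_cont_t φ hφ
    have h2 := aux_cont_x φ hφ
    have h3 := aux_cont_xx φ hφ
    refine (h1.comp continuous_fst).sub ?_
    have h4 : Continuous (fun z : (ℝ × EuclideanSpace ℝ (Fin n)) × ℝ =>
      (z.1.1, z.1.2, z.2, pxGrad φ z.1, pxHess φ z.1)) := by fun_prop
    exact hFcont.comp h4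
  obtain ⟨ρ, hρ, hball⟩ := Metric.isOpen_iff.1 (isOpen_lt continuous_const hG)
    ((T, xbar), u (T, xbar)) hcon
  -- small ball
  obtain ⟨r1, hr1, hφr⟩ := Metric.continuous_iff.1 hφ.continuous (T, xbar) (ρ / 2) (by linarith)
  obtain ⟨r, hr, hrρ, hrT, hrr1⟩ : ∃ r > 0, r < ρ ∧ r < T ∧ r < r1 := by
    refine ⟨min ρ (min T r1) / 2, by positivity, ?_, ?_, ?_⟩
    · have := min_le_left ρ (min T r1); linarith
    · have := (min_le_right ρ (min T r1)).trans (min_le_left _ _); linarith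
    · have := (min_le_right ρ (min T r1)).trans (min_le_right _ _); linarith
  set P : ℝ × EuclideanSpace ℝ (Fin n) := (T, xbar) with hP
  set M := u P - φ P with hM
  have habs : ∀ p : ℝ × EuclideanSpace ℝ (Fin n), |p.1 - T| ≤ dist p P := by
    intro p
    rw [← Real.dist_eq]
    exact le_max_left _ _
  have hdom : ∀ p ∈ Metric.closedBall P r, p.1 ≤ T →
      p ∈ Icc 0 T ×ˢ (univ : Set (EuclideanSpace ℝ (Fin n))) := by
    intro p hp hpT
    have h := habs p
    have h' := Metric.mem_closedBall.1 hp
    have := (abs_le.1 (h.trans h')).1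
    exact ⟨⟨by linarith, hpT⟩, mem_univ _⟩
  have hle : ∀ p ∈ Metric.closedBall P r, p.1 ≤ T → u p - φ p ≤ M := by
    intro p hp hpT
    by_cases h : p = P
    · rw [h]
    · exact (hstrict p (hdom p hp hpT) h).le
  have hucf : UpperSemicontinuousOn (fun p => u p - φ p)
      (Icc 0 T ×ˢ (univ : Set (EuclideanSpace ℝ (Fin n)))) := by
    have := husc.add (hφ.continuous.neg.continuousOn.upperSemicontinuousOn
      (s := Icc 0 T ×ˢ (univ : Set (EuclideanSpace ℝ (Fin n)))))
    simpa [sub_eq_add_neg] using this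
  have hclosed : ∀ a : ℝ, IsClosed {p : ℝ × EuclideanSpace ℝ (Fin n) | p.1 ≤ a} := fun a =>
    isClosed_le continuous_fst continuous_const
  obtain ⟨m, hmM, hmρ, hm⟩ : ∃ m < M, M - ρ / 2 ≤ m ∧
      ∀ p ∈ Metric.sphere P r, p.1 ≤ T → u p - φ p ≤ m := by
    by_cases hne : (Metric.sphere P r ∩ {p | p.1 ≤ T}).Nonempty
    · have hc : IsCompact (Metric.sphere P r ∩ {p | p.1 ≤ T}) :=
        (isCompact_sphere P r).inter_right (hclosed T)
      obtain ⟨q, hq, hqm⟩ := (hucf.mono (fun p hp => hdom p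
        (Metric.sphere_subset_closedBall hp.1) hp.2)).exists_isMaxOn hne hc
      refine ⟨max (u q - φ q) (M - ρ / 2), max_lt ?_ (by linarith), le_max_right _ _, ?_⟩
      · refine hstrict q (hdom q (Metric.sphere_subset_closedBall hq.1) hq.2) ?_
        rintro rfl
        have := Metric.mem_sphere.1 hq.1
        rw [dist_self] at this
        linarith
      · intro p hp hpT
        exact (hqm ⟨hp, hpT⟩ : _).trans (le_max_left _ _)
    · refine ⟨M - ρ / 2, by linarith, le_rfl, ?_⟩
      intro p hp hpT
      exact absurd ⟨p, hp, hpT⟩ hne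
  -- a good interior point from the limsup
  obtain ⟨p1, hp1b, hp1T, hp1m⟩ : ∃ p1 ∈ Metric.ball P r, p1.1 < T ∧ m < u p1 - φ p1 := by
    obtain ⟨C, hC⟩ := hub
    have hneb : (nhdsWithin P (Ico 0 T ×ˢ (univ : Set (EuclideanSpace ℝ (Fin n))))).NeBot := by
      rw [← mem_closure_iff_nhdsWithin_neBot, closure_prod_eq, closure_Ico hT.ne, closure_univ]
      exact ⟨⟨hT.le, le_rfl⟩, mem_univ _⟩
    have hlt : u P - (M - m) / 2 <
        limsup u (nhdsWithin P (Ico 0 T ×ˢ (univ : Set (EuclideanSpace ℝ (Fin n))))) := by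
      rw [← henv xbar]
      show u P - _ < u P
      linarith
    have hco : IsCoboundedUnder (· ≤ ·)
        (nhdsWithin P (Ico 0 T ×ˢ (univ : Set (EuclideanSpace ℝ (Fin n))))) u :=
      IsBoundedUnder.isCoboundedUnder_le
        (isBoundedUnder_of ⟨-C, fun p => (abs_le.1 (hC p)).1⟩)
    have hfr := frequently_lt_of_lt_limsup hco hlt
    have hev1 : ∀ᶠ p in nhdsWithin P (Ico 0 T ×ˢ (univ : Set (EuclideanSpace ℝ (Fin n)))),
        φ p < φ P + (M - m) / 2 :=
      mem_nhdsWithin_of_mem_nhds (hφ.continuous.continuousAt.eventually_lt_const (by linarith))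
    have hev2 : ∀ᶠ p in nhdsWithin P (Ico 0 T ×ˢ (univ : Set (EuclideanSpace ℝ (Fin n)))),
        p ∈ Metric.ball P r := mem_nhdsWithin_of_mem_nhds (Metric.ball_mem_nhds P hr)
    obtain ⟨p, hp1, hp2, hp3, hp4⟩ :=
      (hfr.and_eventually (hev1.and (hev2.and self_mem_nhdsWithin))).exists
    exact ⟨p, hp3, hp4.1.2, by linarith⟩
  have hs1 : 0 < T - p1.1 := by linarith
  -- the penalization parameter
  obtain ⟨ε, hε, hεm⟩ : ∃ ε > 0, m < u p1 - φ p1 - ε * (1 / (T - p1.1)) := by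
    refine ⟨(u p1 - φ p1 - m) / 2 * (T - p1.1), mul_pos (by linarith) hs1, ?_⟩
    have : (u p1 - φ p1 - m) / 2 * (T - p1.1) * (1 / (T - p1.1)) = (u p1 - φ p1 - m) / 2 := by
      field_simp
    rw [this]
    linarith
  set g : ℝ × EuclideanSpace ℝ (Fin n) → ℝ := fun p => u p - φ p - ε * (1 / (T - p.1)) with hg
  have hg1 : m < g p1 := hεm
  have hg1M : g p1 < M := by
    have h1 := hle p1 (Metric.ball_subset_closedBall hp1b) hp1T.le
    have h2 : 0 < ε * (1 / (T - p1.1)) := by positivity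
    show u p1 - φ p1 - ε * (1 / (T - p1.1)) < M
    linarith
  obtain ⟨t2, ht2T, ht12, ht2⟩ : ∃ t2 < T, p1.1 ≤ t2 ∧ M - g p1 + 1 ≤ ε * (1 / (T - t2)) := by
    have hpos : 0 < M - g p1 + 1 := by linarith
    have ha : 0 < min (T - p1.1) (ε / (M - g p1 + 1)) := lt_min hs1 (by positivity)
    refine ⟨T - min (T - p1.1) (ε / (M - g p1 + 1)), by linarith, ?_, ?_⟩
    · have := min_le_left (T - p1.1) (ε / (M - g p1 + 1))
      linarith
    · have h := min_le_right (T - p1.1) (ε / (M - g p1 + 1))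
      rw [sub_sub_cancel, mul_one_div, le_div_iff₀ ha]
      calc (M - g p1 + 1) * min (T - p1.1) (ε / (M - g p1 + 1))
          ≤ (M - g p1 + 1) * (ε / (M - g p1 + 1)) := by gcongr
        _ = ε := by field_simp
  have hcK : IsCompact (Metric.closedBall P r ∩ {p | p.1 ≤ t2}) :=
    (isCompact_closedBall P r).inter_right (hclosed t2)
  have hgusc : UpperSemicontinuousOn g (Metric.closedBall P r ∩ {p | p.1 ≤ t2}) := by
    have h1 : UpperSemicontinuousOn (fun p => u p - φ p)
      (Metric.closedBall P r ∩ {p | p.1 ≤ t2}) :=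
      hucf.mono (fun p hp => hdom p hp.1 (le_trans hp.2 ht2T.le))
    have h2 : ContinuousOn (fun p : ℝ × EuclideanSpace ℝ (Fin n) => -(ε * (1 / (T - p.1))))
        (Metric.closedBall P r ∩ {p | p.1 ≤ t2}) := by
      refine (continuousOn_const.mul (continuousOn_const.div
        (continuousOn_const.sub continuousOn_fst) ?_)).neg
      intro p hp
      have : p.1 ≤ t2 := hp.2
      exact (by linarith : 0 < T - p.1).ne'
    have := h1.add h2.upperSemicontinuousOn
    simpa [hg, sub_eq_add_neg] using this
  have hneK : (Metric.closedBall P r ∩ {p | p.1 ≤ t2}).Nonempty :=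
    ⟨p1, Metric.ball_subset_closedBall hp1b, ht12⟩
  obtain ⟨p0, hp0, hmax⟩ := hgusc.exists_isMaxOn hneK hcK
  have hmax' : ∀ p ∈ Metric.closedBall P r, p.1 ≤ t2 → g p ≤ g p0 := fun p h1 h2 => hmax ⟨h1, h2⟩
  have hg0 : g p1 ≤ g p0 := hmax' p1 (Metric.ball_subset_closedBall hp1b) ht12
  have hp0t : p0.1 ≤ t2 := hp0.2
  have hp0T : p0.1 < T := by linarith
  have hs0 : 0 < T - p0.1 := by linarith
  have hpen : 0 < ε * (1 / (T - p0.1)) := by positivity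
  have hgp0 : g p0 = u p0 - φ p0 - ε * (1 / (T - p0.1)) := rfl
  have hp0M := hle p0 hp0.1 hp0T.le
  have hp0lt : p0.1 < t2 := by
    refine lt_of_le_of_ne hp0t fun h => ?_
    rw [h] at hgp0
    linarith
  have hp0ball : p0 ∈ Metric.ball P r := by
    refine Metric.mem_ball.2 (lt_of_le_of_ne (Metric.mem_closedBall.1 hp0.1) fun h => ?_)
    have := hm p0 h hp0T.le
    linarith
  have hp0d : dist p0 P < r := hp0ball
  have hp0pos : 0 < p0.1 := by
    have := (abs_lt.1 ((habs p0).trans_lt hp0d)).1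
    linarith
  have hφ0 : |φ p0 - φ P| < ρ / 2 := by
    have := hφr p0 (hp0d.trans hrr1)
    rwa [Real.dist_eq] at this
  have hmem : (p0, u p0) ∈ Metric.ball (P, u P) ρ := by
    rw [Metric.mem_ball, Prod.dist_eq, max_lt_iff]
    refine ⟨hp0d.trans hrρ, ?_⟩
    show dist (u p0) (u P) < ρ
    rw [Real.dist_eq, abs_lt]
    have := abs_lt.1 hφ0
    constructor <;> linarith [this.1, this.2]
  have hpos : 0 < ptDeriv φ p0 - F p0.1 p0.2 (u p0) (pxGrad φ p0) (pxHess φ p0) := hball hmem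
  -- test function
  set c0 := ε * (1 / (T - p0.1)) with hc0
  set c1 := ε * (1 / (T - p0.1) ^ 2) with hc1
  set c2 := ε * (2 / (T - p0.1) ^ 3) with hc2
  set ψ : ℝ × EuclideanSpace ℝ (Fin n) → ℝ := fun p =>
      φ p + (c0 + c1 * (p.1 - p0.1) + c2 * (p.1 - p0.1) ^ 2) with hψ
  have hψd : ∀ p v, fderiv ℝ ψ p v = fderiv ℝ φ p v + (c1 + 2 * c2 * (p.1 - p0.1)) * v.1 :=
    fun p v => aux_fderiv φ hφ c0 c1 c2 p0.1 p v
  have hψC : ContDiff ℝ 2 ψ := by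
    refine hφ.add ?_
    fun_prop
  have hloc : IsLocalMaxOn (fun p => u p - ψ p)
      (Ioo 0 T ×ˢ (univ : Set (EuclideanSpace ℝ (Fin n)))) (p0.1, p0.2) := by
    have e1 : ∀ᶠ p in nhds p0, p ∈ Metric.ball P r := Metric.isOpen_ball.mem_nhds hp0ball
    have e2 : ∀ᶠ p : ℝ × EuclideanSpace ℝ (Fin n) in nhds p0, p.1 < t2 :=
      continuous_fst.continuousAt.eventually_lt_const hp0lt
    have e3 : ∀ᶠ p : ℝ × EuclideanSpace ℝ (Fin n) in nhds p0, p.1 < (T + p0.1) / 2 :=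
      continuous_fst.continuousAt.eventually_lt_const (by linarith)
    refine mem_nhdsWithin_of_mem_nhds ?_
    filter_upwards [e1, e2, e3] with p h1 h2 h3
    have h4 : u p - φ p - ε * (1 / (T - p.1)) ≤ u p0 - φ p0 - c0 :=
      hmax' p (Metric.ball_subset_closedBall h1) h2.le
    have h5 := mul_le_mul_of_nonneg_left (aux_ineq T p0.1 p.1 hp0T h3) hε.le
    have h6 : ε * (1 / (T - p0.1) + 1 / (T - p0.1) ^ 2 * (p.1 - p0.1)
      + 2 / (T - p0.1) ^ 3 * (p.1 - p0.1) ^ 2) =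
        c0 + c1 * (p.1 - p0.1) + c2 * (p.1 - p0.1) ^ 2 := by
      rw [hc0, hc1, hc2]; ring
    show u p - (φ p + (c0 + c1 * (p.1 - p0.1) + c2 * (p.1 - p0.1) ^ 2)) ≤
      u p0 - (φ p0 + (c0 + c1 * (p0.1 - p0.1) + c2 * (p0.1 - p0.1) ^ 2))
    rw [sub_self]
    linarith
  have hfin := hsub ψ hψC p0.1 ⟨hp0pos, hp0T⟩ p0.2 hloc
  have hgrad : pxGrad ψ p0 = pxGrad φ p0 := by
    simp [pxGrad, hψd]
  have hhess : pxHess ψ p0 = pxHess φ p0 := by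
    unfold pxHess
    simp [hψd]
    rfl
  have htd : ptDeriv ψ p0 = ptDeriv φ p0 + c1 := by
    simp [ptDeriv, hψd]
  have hc1pos : 0 < c1 := by positivity
  change ptDeriv ψ p0 - F p0.1 p0.2 (u p0) (pxGrad ψ p0) (pxHess ψ p0) ≤ 0 at hfin
  rw [hgrad, hhess, htd] at hfin
  linarith
end

section
/- Assume F : [0,T]×ℝⁿ×ℝ×ℝⁿ×Sⁿ → ℝ is proper with γ > 0 and satisfies the structural condition F(t,x,r,α(x−x̃),X) − F(t,x̃,r,α(x−x̃),Y) ≤ θ_R(α|x−x̃|²+|x−x̃|) whenever |r| ≤ R and (X,Y) satisfy the Crandall–Ishii matrix inequality, together with uniform continuity of F on sets where u,p,X are bounded. Let u ∈ bUSC, v ∈ bLSC on [0,T]×ℝⁿ be sub- /supersolutions of ∂ₜ − F = 0 on (0,T]×ℝⁿ with u(0,·), v(0,·) ∈ BUC(ℝⁿ) and u(0,·) ≤ v(0,·). Then for all (t,x,y) ∈ [0,T]×ℝⁿ×ℝⁿ: u(t,x) − v(t,y) ≤ inf_{α>0} [(α/2)|x−y|² + l(α)], where l(α) → 0 as α → ∞.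 -/
open Set Filter Matrix

variable {n : ℕ}

/-! ### Part 1: a Jensen-Alexandrov type maximum principle -/

section JensenAlexandrov

lemma ja_lip (φ : ℝ → ℝ) (k K : ℝ)
    (h : ∀ s ∈ Icc (0:ℝ) 1, ∀ s' ∈ Icc (0:ℝ) 1, φ s - φ s' ≤ k * |s - s'| + K * (s - s') ^ 2) :
    |φ 1 - φ 0| ≤ k := by
  have key : ∀ N : ℕ, 0 < N → |φ 1 - φ 0| ≤ k + K * (1 / (N:ℝ)) := by
    intro N hN
    have hN' : (0:ℝ) < N := by exact_mod_cast hN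
    have step : ∀ i : ℕ, i ≤ N → |φ (i / N) - φ 0| ≤ i * (k / N + K / N ^ 2) := by
      intro i
      induction i with
      | zero => intro _; simp
      | succ i ih =>
        intro hi
        have ih' := ih (by omega)
        have hi1 : ((i:ℝ) + 1) ≤ N := by exact_mod_cast hi
        have m1 : ((i:ℝ) / N) ∈ Icc (0:ℝ) 1 :=
          ⟨by positivity, by rw [div_le_one hN']; linarith⟩
        have m2 : (((i + 1 : ℕ):ℝ) / N) ∈ Icc (0:ℝ) 1 :=
          ⟨by positivity, by rw [div_le_one hN']; push_cast; linarith⟩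
        have a1 := h _ m1 _ m2
        have a2 := h _ m2 _ m1
        have e : (((i + 1 : ℕ):ℝ) / N) - (i:ℝ) / N = 1 / N := by push_cast; ring
        have e' : (i:ℝ) / N - (((i + 1 : ℕ):ℝ) / N) = -(1 / N) := by push_cast; ring
        rw [e'] at a1
        rw [e] at a2
        rw [abs_neg, abs_of_pos (by positivity)] at a1
        rw [abs_of_pos (by positivity)] at a2
        have e3 : k * (1 / (N:ℝ)) + K * (1 / (N:ℝ)) ^ 2 = k / N + K / N ^ 2 := by
          field_simp
        have e4 : k * (1 / (N:ℝ)) + K * (-(1 / (N:ℝ))) ^ 2 = k / N + K / N ^ 2 := by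
          field_simp
        rw [e4] at a1
        rw [e3] at a2
        rw [abs_le] at ih' ⊢
        push_cast at *
        constructor <;> nlinarith [ih'.1, ih'.2]
    have := step N le_rfl
    rw [div_self hN'.ne'] at this
    refine this.trans (le_of_eq ?_)
    field_simp
  have lim : Tendsto (fun N : ℕ => k + K * (1 / (N:ℝ))) atTop (nhds (k + K * 0)) :=
    (tendsto_one_div_atTop_nhds_zero_nat.const_mul K).const_add k
  rw [mul_zero, add_zero] at lim
  exact ge_of_tendsto lim (by
    filter_upwards [eventually_gt_atTop 0] with N hN using key N hN)

variable {E : Type*} [NormedAddCommGroup E] [InnerProductSpace ℝ E]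

/-- `q` is a subgradient of `g` at `y` up to the quadratic correction `C/2`. -/
def IsSubg (C : ℝ) (g : E → ℝ) (y q : E) : Prop :=
  ∀ z, g y + inner ℝ q (z - y) - C / 2 * ‖z - y‖ ^ 2 ≤ g z

lemma IsSubg.mono {C : ℝ} {g : E → ℝ} {y1 q1 y2 q2 : E} (h1 : IsSubg C g y1 q1)
    (h2 : IsSubg C g y2 q2) : -(C * ‖y1 - y2‖ ^ 2) ≤ inner ℝ (q1 - q2) (y1 - y2) := by
  have a := h1 y2
  have b := h2 y1
  rw [← norm_neg, neg_sub] at a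
  have e : inner ℝ q1 (y2 - y1) = - inner ℝ q1 (y1 - y2) := by
    rw [← inner_neg_right, neg_sub]
  rw [inner_sub_left]
  rw [e] at a
  linarith

lemma subg_lip {C : ℝ} (hC : 0 < C) {g : E → ℝ} {y1 q1 y2 q2 : E} (h1 : IsSubg C g y1 q1)
    (h2 : IsSubg C g y2 q2) :
    ‖y1 - y2‖ ≤ 2 * ‖(y1 + (1 / (2 * C)) • q1) - (y2 + (1 / (2 * C)) • q2)‖ := by
  have m := h1.mono h2
  set w := (y1 + (1 / (2 * C)) • q1) - (y2 + (1 / (2 * C)) • q2) with hw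
  have e : q1 - q2 = (2 * C) • (w - (y1 - y2)) := by
    have : w - (y1 - y2) = (1 / (2 * C)) • (q1 - q2) := by
      rw [hw, smul_sub]; abel
    rw [this, smul_smul]
    field_simp
    simp
  rw [e, inner_smul_left, inner_sub_left, real_inner_self_eq_norm_sq] at m
  simp only [conj_trivial] at m
  have cs := real_inner_le_norm w (y1 - y2)
  have : C * ‖y1 - y2‖ ^ 2 ≤ 2 * C * (‖w‖ * ‖y1 - y2‖) := by nlinarith
  have h3 : ‖y1 - y2‖ ^ 2 ≤ 2 * (‖w‖ * ‖y1 - y2‖) := by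
    have : C * ‖y1 - y2‖ ^ 2 ≤ C * (2 * (‖w‖ * ‖y1 - y2‖)) := by linarith
    exact le_of_mul_le_mul_left this hC
  rcases (norm_nonneg (y1 - y2)).eq_or_lt with h0 | h0
  · rw [← h0]; positivity
  · nlinarith

lemma subg_of_max {C : ℝ} (hC : 0 < C) {g : E → ℝ} {y0 p : E}
    (hmax : ∀ z, g z ≤ g y0 + inner ℝ p (z - y0)) {q : E} (hq : IsSubg C g y0 q) : q = p := by
  have h := hq (y0 + (1 / C) • (q - p))
  have h' := hmax (y0 + (1 / C) • (q - p))
  simp only [add_sub_cancel_left, inner_smul_right, norm_smul] at h h'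
  have e : inner ℝ q (q - p) - inner ℝ p (q - p) = ‖q - p‖ ^ 2 := by
    rw [← inner_sub_left, real_inner_self_eq_norm_sq]
  have e2 : C / 2 * (‖1 / C‖ * ‖q - p‖) ^ 2 = 1 / (2 * C) * ‖q - p‖ ^ 2 := by
    rw [Real.norm_of_nonneg (by positivity)]; field_simp
  rw [e2] at h
  have : 1 / C * ‖q - p‖ ^ 2 - 1 / (2 * C) * ‖q - p‖ ^ 2 ≤ 0 := by
    have e' := congrArg (fun t => 1 / C * t) e
    simp only [mul_sub] at e'
    linarith
  have e3 : 1 / C * ‖q - p‖ ^ 2 - 1 / (2 * C) * ‖q - p‖ ^ 2 = 1 / (2 * C) * ‖q - p‖ ^ 2 := by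
    field_simp; ring
  rw [e3] at this
  have hpos : 0 < 1 / (2 * C) := by positivity
  have : ‖q - p‖ ^ 2 ≤ 0 := by
    by_contra hh
    push Not at hh
    have := mul_pos hpos hh
    linarith
  have : ‖q - p‖ = 0 := by nlinarith [norm_nonneg (q - p)]
  exact sub_eq_zero.mp (norm_eq_zero.mp this)

/-- at an upper contact point, subgradients nearby vary at most linearly. -/
lemma subg_near {C : ℝ} (hC : 0 < C) {g : E → ℝ} {y0 p : E}
    (hmax : ∀ z, g z ≤ g y0 + inner ℝ p (z - y0)) (hp : IsSubg C g y0 p)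
    {y q : E} (hq : IsSubg C g y q) : ‖q - p‖ ≤ C * ‖y - y0‖ := by
  have h := hq (y + (1 / C) • (q - p))
  have h' := hmax (y + (1 / C) • (q - p))
  have h2 := hp y
  have e0 : y + (1 / C) • (q - p) - y0 = (y - y0) + (1 / C) • (q - p) := by abel
  rw [e0, inner_add_right, inner_smul_right] at h'
  simp only [add_sub_cancel_left, inner_smul_right, norm_smul] at h
  have e : inner ℝ q (q - p) - inner ℝ p (q - p) = ‖q - p‖ ^ 2 := by
    rw [← inner_sub_left, real_inner_self_eq_norm_sq]
  have e2 : C / 2 * (‖1 / C‖ * ‖q - p‖) ^ 2 = 1 / (2 * C) * ‖q - p‖ ^ 2 := by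
    rw [Real.norm_of_nonneg (by positivity)]; field_simp
  rw [e2] at h
  have : 1 / C * ‖q - p‖ ^ 2 - 1 / (2 * C) * ‖q - p‖ ^ 2 ≤ C / 2 * ‖y - y0‖ ^ 2 := by
    have e' := congrArg (fun t => 1 / C * t) e
    simp only [mul_sub] at e'
    linarith
  have e3 : 1 / C * ‖q - p‖ ^ 2 - 1 / (2 * C) * ‖q - p‖ ^ 2 = 1 / (2 * C) * ‖q - p‖ ^ 2 := by
    field_simp; ring
  rw [e3] at this
  have h5 : ‖q - p‖ ^ 2 ≤ (C * ‖y - y0‖) ^ 2 := by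
    have := mul_le_mul_of_nonneg_left this (by positivity : 0 ≤ 2 * C)
    have e5 : 2 * C * (1 / (2 * C) * ‖q - p‖ ^ 2) = ‖q - p‖ ^ 2 := by field_simp
    rw [e5] at this
    nlinarith
  exact abs_le_of_sq_le_sq' h5 (by positivity) |>.2

/-- second order expansion of `g` from the first-order expansion of its subgradients. -/
lemma ja_expand {C : ℝ} {g : E → ℝ} {y0 p : E} (A : E →L[ℝ] E)
    (hH : ∀ y, ∃ q, IsSubg C g y q) {ε δ : ℝ}
    (hA : ∀ y q, IsSubg C g y q → ‖y - y0‖ < δ → ‖q - p - A (y - y0)‖ ≤ ε * ‖y - y0‖)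
    (hε : 0 ≤ ε) (h : E) (hh : ‖h‖ < δ) :
    |g (y0 + h) - g y0 - inner ℝ p h - 1 / 2 * inner ℝ (A h) h| ≤ ε * ‖h‖ ^ 2 := by
  set φ : ℝ → ℝ := fun s => g (y0 + s • h) - s * inner ℝ p h - s ^ 2 / 2 * inner ℝ (A h) h
  have := ja_lip φ (ε * ‖h‖ ^ 2) (C / 2 * ‖h‖ ^ 2 + 1 / 2 * |inner ℝ (A h) h|) ?_
  · simp only [φ, one_smul, zero_smul, add_zero] at this
    convert this using 2
    ring
  intro s hs s' hs'
  obtain ⟨q, hq⟩ := hH (y0 + s • h)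
  have h1 := hq (y0 + s' • h)
  have e1 : y0 + s' • h - (y0 + s • h) = (s' - s) • h := by rw [sub_smul]; abel
  have e2 : y0 + s • h - y0 = s • h := by abel
  have nsh : ‖s • h‖ ≤ ‖h‖ := by
    rw [norm_smul, Real.norm_of_nonneg hs.1]
    exact mul_le_of_le_one_left (norm_nonneg _) hs.2
  have h2 := hA _ q hq (by rw [e2]; exact lt_of_le_of_lt nsh hh)
  rw [e2] at h2
  rw [e1, inner_smul_right, norm_smul, mul_pow, Real.norm_eq_abs, sq_abs] at h1
  have h3 : |inner ℝ (q - p - A (s • h)) h| ≤ ε * ‖h‖ ^ 2 := by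
    refine (abs_real_inner_le_norm _ _).trans ?_
    calc ‖q - p - A (s • h)‖ * ‖h‖ ≤ (ε * ‖h‖) * ‖h‖ := by
          gcongr; exact h2.trans (by gcongr)
      _ = _ := by ring
  rw [inner_sub_left, inner_sub_left, map_smul, inner_smul_left, conj_trivial] at h3
  set a := inner ℝ (A h) h
  set b := inner ℝ q h
  set d := inner ℝ p h
  simp only [φ]
  have h4 : (s - s') * (b - d - s * a) ≤ ε * ‖h‖ ^ 2 * |s - s'| := by
    calc (s - s') * (b - d - s * a) ≤ |(s - s') * (b - d - s * a)| := le_abs_self _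
      _ = |s - s'| * |b - d - s * a| := abs_mul _ _
      _ ≤ |s - s'| * (ε * ‖h‖ ^ 2) := by gcongr
      _ = _ := by ring
  have h5 : a * (s - s') ^ 2 ≤ |a| * (s - s') ^ 2 := by
    gcongr; exact le_abs_self a
  nlinarith

lemma ja_convex_cont [FiniteDimensional ℝ E] {C : ℝ} {g : E → ℝ}
    (hH : ∀ y, ∃ q, IsSubg C g y q) : Continuous g := by
  have hc : ConvexOn ℝ univ (fun z => g z + C / 2 * ‖z‖ ^ 2) := by
    refine ⟨convex_univ, ?_⟩
    intro x _ y _ a b ha hb hab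
    obtain ⟨q, hq⟩ := hH (a • x + b • y)
    set m := a • x + b • y with hm
    have k : ∀ z, g m + C / 2 * ‖m‖ ^ 2 + inner ℝ (q + C • m) (z - m) ≤ g z + C / 2 * ‖z‖ ^ 2 := by
      intro z
      have h1 := hq z
      have e : ‖z‖ ^ 2 = ‖m‖ ^ 2 + 2 * inner ℝ m (z - m) + ‖z - m‖ ^ 2 := by
        have := norm_add_sq_real m (z - m)
        rwa [add_sub_cancel] at this
      rw [e, inner_add_left, inner_smul_left, conj_trivial]
      linarith
    have kx := mul_le_mul_of_nonneg_left (k x) ha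
    have ky := mul_le_mul_of_nonneg_left (k y) hb
    have e : a * inner ℝ (q + C • m) (x - m) + b * inner ℝ (q + C • m) (y - m) = 0 := by
      rw [← inner_smul_right, ← inner_smul_right, ← inner_add_right]
      have : a • (x - m) + b • (y - m) = 0 := by
        rw [smul_sub, smul_sub]
        have : a • m + b • m = m := by rw [← add_smul, hab, one_smul]
        calc a • x - a • m + (b • y - b • m) = (a • x + b • y) - (a • m + b • m) := by abel
          _ = 0 := by rw [this, ← hm, sub_self]
      rw [this, inner_zero_right]
    simp only [smul_eq_mul]
    have : (a + b) * (g m + C / 2 * ‖m‖ ^ 2) = g m + C / 2 * ‖m‖ ^ 2 := by rw [hab, one_mul]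
    nlinarith
  have h1 := hc.locallyLipschitz.continuous
  have h2 : Continuous (fun z : E => (g z + C / 2 * ‖z‖ ^ 2) - C / 2 * ‖z‖ ^ 2) := by fun_prop
  simpa using h2

/-- Jensen-Alexandrov for coercive semiconvex functions. -/
lemma ja_core [FiniteDimensional ℝ E] [MeasurableSpace E] [BorelSpace E] {C : ℝ} (hC : 0 < C)
    {g : E → ℝ} (hH : ∀ y, ∃ q, IsSubg C g y q) {B c : ℝ} (hc : 0 < c) (z0 : E)
    (hB : ∀ z, g z ≤ B - c * ‖z - z0‖ ^ 2) {r : ℝ} (hr : 0 < r) :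
    ∃ (y0 p : E) (A : E →L[ℝ] E), ‖p‖ < r ∧ (∀ z, g z ≤ g y0 + inner ℝ p (z - y0)) ∧
      ∀ ε > 0, ∃ δ > 0, ∀ h : E, ‖h‖ < δ →
        |g (y0 + h) - g y0 - inner ℝ p h - 1 / 2 * inner ℝ (A h) h| ≤ ε * ‖h‖ ^ 2 := by
  have hcont := ja_convex_cont hH
  -- existence of maximizers
  have hmaxex : ∀ p : E, ∃ y, ∀ z, g z ≤ g y + inner ℝ p (z - y) := by
    intro p
    have hco : ∀ z, g z - inner ℝ p z ≤ B + ‖p‖ * ‖z0‖ + ‖p‖ * ‖z - z0‖ - c * ‖z - z0‖ ^ 2 := by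
      intro z
      have h1 := hB z
      have h2 : -(inner ℝ p z) ≤ ‖p‖ * ‖z‖ := by
        have := abs_real_inner_le_norm p z
        linarith [neg_abs_le (inner ℝ p z)]
      have h3 : ‖z‖ ≤ ‖z - z0‖ + ‖z0‖ := by
        have := norm_add_le (z - z0) z0
        simpa using this
      have := mul_le_mul_of_nonneg_left h3 (norm_nonneg p)
      linarith
    have hev : ∀ᶠ z in cocompact E, g z - inner ℝ p z ≤ g z0 - inner ℝ p z0 := by
      have t1 : Tendsto (fun z : E => ‖z - z0‖) (cocompact E) atTop := by
        have := tendsto_dist_left_cocompact_atTop z0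
        refine this.congr fun z => ?_
        rw [dist_comm, dist_eq_norm]
      have t2 : Tendsto (fun s : ℝ => s * (c * s - ‖p‖)) atTop atTop := by
        refine Tendsto.atTop_mul_atTop₀ tendsto_id ?_
        exact tendsto_atTop_add_const_right _ _ (tendsto_id.const_mul_atTop hc)
      have t3 := (t2.comp t1).eventually_ge_atTop (B + ‖p‖ * ‖z0‖ - (g z0 - inner ℝ p z0))
      filter_upwards [t3] with z hz
      have := hco z
      simp only [Function.comp] at hz
      nlinarith
    obtain ⟨y, hy⟩ := (show Continuous fun z => g z - inner ℝ p z by fun_prop).exists_forall_ge' z0 hev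
    refine ⟨y, fun z => ?_⟩
    have := hy z
    rw [inner_sub_right]
    linarith
  have hsubp : ∀ p y, (∀ z, g z ≤ g y + inner ℝ p (z - y)) → IsSubg C g y p := by
    intro p y hy
    obtain ⟨q, hq⟩ := hH y
    have := subg_of_max hC hy hq
    rwa [this] at hq
  -- the resolvent
  set D : Set E := {z | ∃ y q, IsSubg C g y q ∧ z = y + (1 / (2 * C)) • q} with hD
  have hch : ∀ z : E, ∃ y, z ∈ D → ∃ q, IsSubg C g y q ∧ z = y + (1 / (2 * C)) • q := by
    intro z
    by_cases hz : z ∈ D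
    · obtain ⟨y, q, h⟩ := hz
      exact ⟨y, fun _ => ⟨q, h⟩⟩
    · exact ⟨0, fun h => absurd h hz⟩
  choose J0 hJ0 using hch
  have hJlip : LipschitzOnWith 2 J0 D := by
    refine LipschitzOnWith.of_dist_le_mul ?_
    intro a ha b hb
    obtain ⟨q, hq, ea⟩ := hJ0 a ha
    obtain ⟨q', hq', eb⟩ := hJ0 b hb
    have := subg_lip hC hq hq'
    rw [← ea, ← eb] at this
    simpa [dist_eq_norm] using this
  have hJ0eq : ∀ y q, IsSubg C g y q → J0 (y + (1 / (2 * C)) • q) = y := by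
    intro y q hq
    obtain ⟨q', hq', e⟩ := hJ0 (y + (1 / (2 * C)) • q) ⟨y, q, hq, rfl⟩
    have := subg_lip hC hq' hq
    rw [← e, sub_self, norm_zero, mul_zero] at this
    exact sub_eq_zero.mp (norm_le_zero_iff.mp this)
  obtain ⟨J, hJ, hJJ⟩ := hJlip.extend_finite_dimension
  have hJeq : ∀ y q, IsSubg C g y q → J (y + (1 / (2 * C)) • q) = y := by
    intro y q hq
    rw [← hJJ ⟨y, q, hq, rfl⟩]
    exact hJ0eq y q hq
  set G : E → E := fun z => (2 * C) • (z - J z) with hG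
  obtain ⟨KG, hGlip⟩ : ∃ K, LipschitzWith K G :=
    ⟨_, (lipschitzWith_smul (2 * C)).comp (LipschitzWith.id.sub hJ)⟩
  have hGeq : ∀ y q, IsSubg C g y q → G (y + (1 / (2 * C)) • q) = q := by
    intro y q hq
    simp only [hG]
    rw [hJeq y q hq, add_sub_cancel_left, smul_smul]
    field_simp
    simp
  set S : Set E := {z | ∃ p y, ‖p‖ < r ∧ (∀ z, g z ≤ g y + inner ℝ p (z - y)) ∧
    z = y + (1 / (2 * C)) • p} with hS
  -- there is a point of `S` where `J` is differentiable
  obtain ⟨zd, hzS, hzd⟩ : ∃ z ∈ S, DifferentiableAt ℝ J z := by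
    by_contra hno
    push Not at hno
    let μ : MeasureTheory.Measure E := MeasureTheory.Measure.hausdorffMeasure (Module.finrank ℝ E)
    have hae : ∀ᵐ z ∂μ, DifferentiableAt ℝ J z := hJ.ae_differentiableAt
    have hS0 : μ S = 0 := by
      refine MeasureTheory.measure_mono_null ?_ hae
      intro z hz
      exact hno z hz
    have h1 := hGlip.hausdorffMeasure_image_le (d := (Module.finrank ℝ E : ℝ)) (by positivity) S
    have h2 : μ (G '' S) = 0 := by
      refine le_antisymm (h1.trans ?_) bot_le
      change _ * μ S ≤ 0
      rw [hS0, mul_zero]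
    have h3 : Metric.ball (0:E) r ⊆ G '' S := by
      intro p hp
      have hp' : ‖p‖ < r := by simpa using hp
      obtain ⟨y, hy⟩ := hmaxex p
      exact ⟨y + (1 / (2 * C)) • p, ⟨p, y, hp', hy, rfl⟩, hGeq y p (hsubp p y hy)⟩
    have h4 : μ (Metric.ball (0:E) r) = 0 := MeasureTheory.measure_mono_null h3 h2
    have h5 := Metric.measure_ball_pos μ (0:E) hr
    exact h5.ne' h4
  obtain ⟨p, y0, hp, hmax, rfl⟩ := hzS
  have hsub0 := hsubp p y0 hmax
  set zz := y0 + (1 / (2 * C)) • p with hzz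
  have hJz : J zz = y0 := hJeq y0 p hsub0
  obtain ⟨L, hL⟩ := hzd
  -- linear estimate
  have hlin : ∀ ε > 0, ∃ δ > 0, ∀ y q, IsSubg C g y q → ‖y - y0‖ < δ →
      ‖(y - y0) - L ((y + (1 / (2 * C)) • q) - zz)‖ ≤ ε * ‖y - y0‖ := by
    intro ε hε
    have := hL.isLittleO.def (show 0 < ε / 2 by positivity)
    obtain ⟨δ, hδ, hb⟩ := Metric.eventually_nhds_iff_ball.mp this
    refine ⟨δ / 2, by positivity, ?_⟩
    intro y q hq hy
    have n1 : ‖(y + (1 / (2 * C)) • q) - zz‖ ≤ 2 * ‖y - y0‖ := by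
      have e : (y + (1 / (2 * C)) • q) - zz = (y - y0) + (1 / (2 * C)) • (q - p) := by
        rw [hzz, smul_sub]; abel
      rw [e]
      refine (norm_add_le _ _).trans ?_
      rw [norm_smul, Real.norm_of_nonneg (by positivity)]
      have := subg_near hC hmax hsub0 hq
      have : 1 / (2 * C) * ‖q - p‖ ≤ 1 / (2 * C) * (C * ‖y - y0‖) := by gcongr
      have e2 : 1 / (2 * C) * (C * ‖y - y0‖) = 1 / 2 * ‖y - y0‖ := by field_simp
      nlinarith [norm_nonneg (y - y0)]
    have h1 := hb (y + (1 / (2 * C)) • q) (by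
      rw [mem_ball_iff_norm]; linarith)
    rw [hJeq y q hq, hJz] at h1
    refine h1.trans ?_
    nlinarith
  have hsurj : Function.Surjective L := by
    have hcl : IsClosed (LinearMap.range (L : E →ₗ[ℝ] E) : Set E) :=
      Submodule.closed_of_finiteDimensional _
    intro d
    have : d ∈ closure (LinearMap.range (L : E →ₗ[ℝ] E) : Set E) := by
      rw [Metric.mem_closure_iff]
      intro ε hε
      obtain ⟨δ, hδ, hb⟩ := hlin (ε / (2 * (‖d‖ + 1))) (by positivity)
      set t := δ / (2 * (‖d‖ + 1)) with ht
      have htpos : 0 < t := by positivity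
      obtain ⟨q, hq⟩ := hH (y0 + t • d)
      have e : y0 + t • d - y0 = t • d := by abel
      have hn : ‖t • d‖ < δ := by
        rw [norm_smul, Real.norm_of_nonneg htpos.le, ht, div_mul_eq_mul_div, div_lt_iff₀ (by positivity)]
        nlinarith [norm_nonneg d]
      have h1 := hb _ q hq (by rw [e]; exact hn)
      rw [e] at h1
      refine ⟨L ((1 / t) • (y0 + t • d + (1 / (2 * C)) • q - zz)), ⟨_, rfl⟩, ?_⟩
      rw [dist_eq_norm]
      have e2 : d - L ((1 / t) • (y0 + t • d + (1 / (2 * C)) • q - zz))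
          = (1 / t) • (t • d - L (y0 + t • d + (1 / (2 * C)) • q - zz)) := by
        rw [map_smul, smul_sub, smul_smul]
        field_simp
        simp
      rw [e2, norm_smul, Real.norm_of_nonneg (by positivity)]
      rw [norm_smul, Real.norm_of_nonneg htpos.le] at h1
      calc 1 / t * _ ≤ 1 / t * (ε / (2 * (‖d‖ + 1)) * (t * ‖d‖)) := by gcongr
        _ = ε * (‖d‖ / (2 * (‖d‖ + 1))) := by field_simp
        _ < ε * 1 := by
          gcongr
          rw [div_lt_one (by positivity)]
          linarith [norm_nonneg d]
        _ = ε := mul_one _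
    rw [hcl.closure_eq] at this
    exact this
  have hbij : Function.Bijective (L : E →ₗ[ℝ] E) :=
    ⟨LinearMap.injective_iff_surjective.mpr hsurj, hsurj⟩
  let Le : E ≃L[ℝ] E := (LinearEquiv.ofBijective (L : E →ₗ[ℝ] E) hbij).toContinuousLinearEquiv
  have hLe : ∀ x, Le x = L x := fun x => rfl
  set M : E →L[ℝ] E := (Le.symm : E →L[ℝ] E) with hM
  have hML : ∀ x, M (L x) = x := fun x => by
    rw [← hLe]; exact Le.symm_apply_apply x
  let A : E →L[ℝ] E := (2 * C) • (M - ContinuousLinearMap.id ℝ E)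
  refine ⟨y0, p, A, hp, hmax, ?_⟩
  intro ε hε
  obtain ⟨δ, hδ, hb⟩ := hlin (ε / (2 * C * (‖M‖ + 1))) (by positivity)
  refine ⟨δ, hδ, fun h hh => ja_expand A hH ?_ hε.le h hh⟩
  intro y q hq hy
  have h1 := hb y q hq hy
  have e : q - p - A (y - y0) =
      -((2 * C) • M ((y - y0) - L ((y + (1 / (2 * C)) • q) - zz))) := by
    have e1 : q - p = (2 * C) • (((y + (1 / (2 * C)) • q) - zz) - (y - y0)) := by
      have : ((y + (1 / (2 * C)) • q) - zz) - (y - y0) = (1 / (2 * C)) • (q - p) := by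
        rw [hzz, smul_sub]; abel
      rw [this, smul_smul]
      field_simp
      simp
    rw [map_sub M, hML, e1]
    simp only [A, _root_.smul_apply, _root_.sub_apply,
      ContinuousLinearMap.id_apply]
    module
  rw [e, norm_neg, norm_smul, Real.norm_of_nonneg (by positivity)]
  calc 2 * C * ‖M ((y - y0) - L ((y + (1 / (2 * C)) • q) - zz))‖
      ≤ 2 * C * (‖M‖ * (ε / (2 * C * (‖M‖ + 1)) * ‖y - y0‖)) := by
        gcongr
        exact (M.le_opNorm _).trans (by gcongr)
    _ = ε * (‖M‖ / (‖M‖ + 1)) * ‖y - y0‖ := by field_simp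
    _ ≤ ε * 1 * ‖y - y0‖ := by
        gcongr
        rw [div_le_one (by positivity)]
        linarith
    _ = _ := by ring

lemma ja_euclid [FiniteDimensional ℝ E] [MeasurableSpace E] [BorelSpace E] {C : ℝ} (hC : 0 < C)
    {f : E → ℝ} (hH : ∀ y, ∃ q, IsSubg C f y q) {B : ℝ} (hB : ∀ z, f z ≤ B)
    {c : ℝ} (hc : 0 < c) :
    ∃ (y0 p : E) (A : E →L[ℝ] E), ‖p‖ ≤ c ∧ (∀ z, f z ≤ f y0 + c) ∧
      (∀ h, inner ℝ (A h) h ≤ c * ‖h‖ ^ 2) ∧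
      ∀ ε > 0, ∃ δ > 0, ∀ h : E, ‖h‖ < δ →
        |f (y0 + h) - f y0 - inner ℝ p h - 1 / 2 * inner ℝ (A h) h| ≤ ε * ‖h‖ ^ 2 := by
  have hbdd : BddAbove (range f) := ⟨B, by rintro _ ⟨z, rfl⟩; exact hB z⟩
  set s := sSup (range f) with hs
  have hle : ∀ z, f z ≤ s := fun z => le_csSup hbdd ⟨z, rfl⟩
  set e := c / 5 with he
  have hepos : 0 < e := by positivity
  obtain ⟨_, ⟨z0, rfl⟩, hz0⟩ := exists_lt_of_lt_csSup (range_nonempty f) (show s - e < s by linarith)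
  have exp2 : ∀ y z : E, ‖z - z0‖ ^ 2 =
      ‖y - z0‖ ^ 2 + 2 * inner ℝ (y - z0) (z - y) + ‖z - y‖ ^ 2 := by
    intro y z
    have := norm_add_sq_real (y - z0) (z - y)
    have e0 : y - z0 + (z - y) = z - z0 := by abel
    rwa [e0] at this
  have hH' : ∀ y, ∃ q, IsSubg (C + 2 * e) (fun z => f z - e * ‖z - z0‖ ^ 2) y q := by
    intro y
    obtain ⟨q, hq⟩ := hH y
    refine ⟨q - (2 * e) • (y - z0), fun z => ?_⟩
    have := hq z
    simp only
    rw [exp2 y z, inner_sub_left, inner_smul_left, conj_trivial]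
    linarith
  obtain ⟨y0, p, A, hp, hmax, hexp⟩ := ja_core (show 0 < C + 2 * e by positivity) hH' hepos z0
    (B := B) (fun z => by have := hB z; linarith) hepos
  have hd : ‖y0 - z0‖ ≤ 2 ∧ ∀ z, f z ≤ f y0 + 2 * e := by
    have h1 := hmax z0
    simp only [sub_self, norm_zero] at h1
    have h2 : inner ℝ p (z0 - y0) ≤ e * ‖y0 - z0‖ := by
      refine (real_inner_le_norm _ _).trans ?_
      rw [norm_sub_rev]
      gcongr
    have h3 := hle y0
    set d := ‖y0 - z0‖ with hd
    have hd0 : 0 ≤ d := norm_nonneg _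
    have h4 : s - e < f y0 - e * d ^ 2 + e * d := by nlinarith
    constructor
    · by_contra hh
      push Not at hh
      have : e * d ^ 2 < e * (1 + d) := by linarith
      have := lt_of_mul_lt_mul_left this hepos.le
      nlinarith
    · intro z
      have := hle z
      have : e * d - e * d ^ 2 ≤ e := by
        have : d - d ^ 2 ≤ 1 := by nlinarith [sq_nonneg (d - 1)]
        nlinarith
      linarith
  have hA0 : ∀ h, inner ℝ (A h) h ≤ 0 := by
    intro h
    by_contra hh
    push Not at hh
    set a := inner ℝ (A h) h with ha
    have hh0 : 0 < ‖h‖ := by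
      rw [norm_pos_iff]; rintro rfl; simp [ha] at hh
    obtain ⟨δ, hδ, hb⟩ := hexp (a / (4 * ‖h‖ ^ 2)) (by positivity)
    set t := δ / (2 * ‖h‖) with ht
    have htpos : 0 < t := by positivity
    have hn : ‖t • h‖ < δ := by
      rw [norm_smul, Real.norm_of_nonneg htpos.le, ht]
      field_simp
      linarith
    have h1 := hb (t • h) hn
    have h2 := hmax (y0 + t • h)
    rw [add_sub_cancel_left] at h2
    simp only [map_smul, inner_smul_left, inner_smul_right, conj_trivial, norm_smul,
      Real.norm_of_nonneg htpos.le, ← ha] at h1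
    rw [inner_smul_right] at h2
    have e3 : a / (4 * ‖h‖ ^ 2) * (t * ‖h‖) ^ 2 = a / 4 * t ^ 2 := by field_simp
    rw [e3, abs_le] at h1
    have := h1.1
    have : 0 < a * t ^ 2 := by positivity
    nlinarith
  refine ⟨y0, p + (2 * e) • (y0 - z0), A + (2 * e) • ContinuousLinearMap.id ℝ E, ?_, ?_, ?_, ?_⟩
  · refine (norm_add_le _ _).trans ?_
    rw [norm_smul, Real.norm_of_nonneg (by positivity)]
    have := mul_le_mul_of_nonneg_left hd.1 (show 0 ≤ 2 * e by positivity)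
    linarith
  · intro z
    have := hd.2 z
    linarith
  · intro h
    have := hA0 h
    simp only [_root_.add_apply, _root_.smul_apply,
      ContinuousLinearMap.id_apply, inner_add_left, inner_smul_left, conj_trivial,
      real_inner_self_eq_norm_sq]
    nlinarith [sq_nonneg ‖h‖]
  · intro ε hε
    obtain ⟨δ, hδ, hb⟩ := hexp ε hε
    refine ⟨δ, hδ, fun h hh => ?_⟩
    have h1 := hb h hh
    have h2 := exp2 y0 (y0 + h)
    rw [add_sub_cancel_left] at h2
    rw [h2] at h1
    simp only [_root_.add_apply, _root_.smul_apply,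
      ContinuousLinearMap.id_apply, inner_add_left, inner_smul_left, conj_trivial,
      real_inner_self_eq_norm_sq]
    convert h1 using 2
    ring

end JensenAlexandrov

/-- Jensen-Alexandrov maximum principle on a finite-dimensional normed space. -/
lemma ja_main {E : Type*} [NormedAddCommGroup E] [NormedSpace ℝ E] [FiniteDimensional ℝ E]
    {C : ℝ} (hC : 0 < C) {f : E → ℝ}
    (hH : ∀ y, ∃ q : E →L[ℝ] ℝ, ∀ z, f y + q (z - y) - C * ‖z - y‖ ^ 2 ≤ f z)
    {B : ℝ} (hB : ∀ z, f z ≤ B) {c : ℝ} (hc : 0 < c) :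
    ∃ (y0 : E) (p : E →L[ℝ] ℝ) (S : E →L[ℝ] E →L[ℝ] ℝ), (∀ h k, S h k = S k h) ∧
      (∀ h, |p h| ≤ c * ‖h‖) ∧ (∀ z, f z ≤ f y0 + c) ∧ (∀ h, S h h ≤ c * ‖h‖ ^ 2) ∧
      ∀ ε > 0, ∃ δ > 0, ∀ h : E, ‖h‖ < δ →
        |f (y0 + h) - f y0 - p h - 1 / 2 * S h h| ≤ ε * ‖h‖ ^ 2 := by
  let e : E ≃L[ℝ] EuclideanSpace ℝ (Fin (Module.finrank ℝ E)) := toEuclidean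
  set N := ‖(e : E →L[ℝ] EuclideanSpace ℝ (Fin (Module.finrank ℝ E)))‖ with hN
  set N' := ‖(e.symm : EuclideanSpace ℝ (Fin (Module.finrank ℝ E)) →L[ℝ] E)‖ with hN'
  have hN0 : 0 ≤ N := norm_nonneg _
  have hN0' : 0 ≤ N' := norm_nonneg _
  have he : ∀ x, ‖e x‖ ≤ N * ‖x‖ := fun x => (e : E →L[ℝ] EuclideanSpace ℝ (Fin (Module.finrank ℝ E))).le_opNorm x
  have he' : ∀ x, ‖e.symm x‖ ≤ N' * ‖x‖ := fun x => (e.symm : EuclideanSpace ℝ (Fin (Module.finrank ℝ E)) →L[ℝ] E).le_opNorm x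
  have hH' : ∀ y, ∃ q, IsSubg (2 * (C * (N' + 1) ^ 2)) (fun z => f (e.symm z)) y q := by
    intro y
    obtain ⟨q, hq⟩ := hH (e.symm y)
    refine ⟨(InnerProductSpace.toDual ℝ _).symm (q.comp (e.symm : EuclideanSpace ℝ (Fin (Module.finrank ℝ E)) →L[ℝ] E)), fun z => ?_⟩
    have h1 := hq (e.symm z)
    rw [InnerProductSpace.toDual_symm_apply]
    simp only [ContinuousLinearMap.comp_apply, ContinuousLinearEquiv.coe_coe, map_sub]
    rw [← map_sub, map_sub] at h1
    have h2 : ‖e.symm (z - y)‖ ^ 2 ≤ ((N' + 1) * ‖z - y‖) ^ 2 := by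
      gcongr
      exact (he' _).trans (by gcongr; linarith)
    rw [map_sub, mul_pow] at h2
    have := mul_le_mul_of_nonneg_left h2 hC.le
    rw [map_sub] at h1
    linarith
  set c' := c / ((N + 1) ^ 2 + 1) with hc'
  have hc'pos : 0 < c' := by positivity
  have hc'1 : c' ≤ c := div_le_self hc.le (by nlinarith)
  have hc'2 : c' * (N + 1) ^ 2 ≤ c := by
    rw [hc', div_mul_eq_mul_div, div_le_iff₀ (by positivity)]
    nlinarith
  have hc'3 : c' * N ≤ c := le_trans (by gcongr; nlinarith) hc'2
  have hc'4 : c' * N ^ 2 ≤ c := le_trans (by gcongr; linarith) hc'2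
  obtain ⟨y0, p, A, h1, h2, h3, h4⟩ := ja_euclid (show 0 < 2 * (C * (N' + 1) ^ 2) by positivity)
    hH' (B := B) (fun z => hB _) hc'pos
  let A1 : E →L[ℝ] E →L[ℝ] ℝ := (innerSL ℝ).bilinearComp (A.comp (e : E →L[ℝ] EuclideanSpace ℝ (Fin (Module.finrank ℝ E)))) (e : E →L[ℝ] EuclideanSpace ℝ (Fin (Module.finrank ℝ E)))
  have hA1 : ∀ h k, A1 h k = inner ℝ (A (e h)) (e k) := fun h k => rfl
  refine ⟨e.symm y0, (innerSL ℝ p).comp (e : E →L[ℝ] EuclideanSpace ℝ (Fin (Module.finrank ℝ E))), (1 / 2 : ℝ) • (A1 + A1.flip), ?_, ?_, ?_, ?_, ?_⟩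
  · intro h k
    simp only [_root_.smul_apply, _root_.add_apply,
      ContinuousLinearMap.flip_apply]
    ring_nf
  · intro h
    simp only [ContinuousLinearMap.comp_apply, ContinuousLinearEquiv.coe_coe, innerSL_apply_apply]
    calc _ ≤ ‖p‖ * ‖e h‖ := abs_real_inner_le_norm _ _
      _ ≤ c' * (N * ‖h‖) := by gcongr; exact he h
      _ = c' * N * ‖h‖ := by ring
      _ ≤ c * ‖h‖ := by gcongr
  · intro z
    have := h2 (e z)
    simp only [ContinuousLinearEquiv.symm_apply_apply] at this
    linarith
  · intro h
    simp only [_root_.smul_apply, _root_.add_apply,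
      ContinuousLinearMap.flip_apply, hA1, smul_eq_mul]
    have := h3 (e h)
    have h5 : ‖e h‖ ^ 2 ≤ (N * ‖h‖) ^ 2 := by gcongr; exact he h
    have h6 : c' * ‖e h‖ ^ 2 ≤ c' * N ^ 2 * ‖h‖ ^ 2 := by
      calc _ ≤ c' * (N * ‖h‖) ^ 2 := by gcongr
        _ = _ := by ring
    have h7 : c' * N ^ 2 * ‖h‖ ^ 2 ≤ c * ‖h‖ ^ 2 := by gcongr
    linarith
  · intro ε hε
    obtain ⟨δ, hδ, hb⟩ := h4 (ε / (N + 1) ^ 2) (by positivity)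
    refine ⟨δ / (N + 1), by positivity, fun h hh => ?_⟩
    have hn : ‖e h‖ ≤ (N + 1) * ‖h‖ := (he h).trans (by gcongr; linarith)
    have h5 := hb (e h) (lt_of_le_of_lt hn (by
      rw [lt_div_iff₀ (by positivity)] at hh; linarith))
    simp only [_root_.smul_apply, _root_.add_apply,
      ContinuousLinearMap.flip_apply, hA1, smul_eq_mul, ContinuousLinearMap.comp_apply,
      ContinuousLinearEquiv.coe_coe, innerSL_apply_apply]
    simp only [map_add, ContinuousLinearEquiv.symm_apply_apply] at h5
    have e1 : ∀ a : ℝ, 1 / 2 * (1 / 2 * (a + a)) = 1 / 2 * a := fun a => by ring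
    rw [e1]
    refine h5.trans ?_
    calc ε / (N + 1) ^ 2 * ‖e h‖ ^ 2 ≤ ε / (N + 1) ^ 2 * ((N + 1) * ‖h‖) ^ 2 := by gcongr
      _ = ε * ‖h‖ ^ 2 := by field_simp

/-! ### Part 2: quadratic test functions and the doubling lemma -/

section Doubling

/-- shorthand for the space-time `ℝ × ℝⁿ` -/
abbrev STS (n : ℕ) := ℝ × EuclideanSpace ℝ (Fin n)

/-- the weighted inner product on space-time -/
noncomputable def Wf (n : ℕ) (a b : ℝ) : STS n →L[ℝ] STS n →L[ℝ] ℝ :=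
  let A1 : STS n →L[ℝ] STS n →L[ℝ] ℝ :=
    (innerSL ℝ).bilinearComp (ContinuousLinearMap.snd ℝ ℝ (EuclideanSpace ℝ (Fin n)))
      (ContinuousLinearMap.snd ℝ ℝ (EuclideanSpace ℝ (Fin n)))
  a • A1 + b • (ContinuousLinearMap.mul ℝ ℝ).bilinearComp
      (ContinuousLinearMap.fst ℝ ℝ (EuclideanSpace ℝ (Fin n)))
      (ContinuousLinearMap.fst ℝ ℝ (EuclideanSpace ℝ (Fin n)))

lemma Wf_apply (a b : ℝ) (d h : STS n) :
    Wf n a b d h = a * inner ℝ d.2 h.2 + b * (d.1 * h.1) := rfl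

lemma Wf_self (a b : ℝ) (d : STS n) : Wf n a b d d = a * ‖d.2‖ ^ 2 + b * d.1 ^ 2 := by
  rw [Wf_apply, real_inner_self_eq_norm_sq, sq d.1]

lemma Wf_symm (a b : ℝ) (d h : STS n) : Wf n a b d h = Wf n a b h d := by
  rw [Wf_apply, Wf_apply, real_inner_comm, mul_comm d.1]

lemma Wf_nonneg {a b : ℝ} (ha : 0 ≤ a) (hb : 0 ≤ b) (d : STS n) : 0 ≤ Wf n a b d d := by
  rw [Wf_self]; positivity

lemma Wf_add (a b : ℝ) (d h : STS n) :
    Wf n a b (d + h) (d + h) = Wf n a b d d + 2 * Wf n a b d h + Wf n a b h h := by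
  simp only [map_add, _root_.add_apply, Wf_symm a b h d]; ring

lemma Wf_le {a b : ℝ} (ha : 0 ≤ a) (hb : 0 ≤ b) (d : STS n) :
    Wf n a b d d ≤ (a + b) * ‖d‖ ^ 2 := by
  rw [Wf_self]
  have h1 : ‖d.2‖ ^ 2 ≤ ‖d‖ ^ 2 := by gcongr; exact norm_snd_le d
  have h2 : d.1 ^ 2 ≤ ‖d‖ ^ 2 := by
    rw [← sq_abs, ← Real.norm_eq_abs]; gcongr; exact norm_fst_le d
  nlinarith

lemma STS_norm_le (d : STS n) : ‖d‖ ^ 2 ≤ Wf n 1 1 d d := by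
  rw [Wf_self, one_mul, one_mul, Prod.norm_def]
  rcases max_cases ‖d.1‖ ‖d.2‖ with h | h
  · rw [h.1, Real.norm_eq_abs, sq_abs]; nlinarith [sq_nonneg ‖d.2‖]
  · rw [h.1]; nlinarith [sq_nonneg d.1]

/-- quadratic test function -/
noncomputable def qtest (p : STS n →L[ℝ] ℝ) (S : STS n →L[ℝ] STS n →L[ℝ] ℝ) (q0 : STS n) :
    STS n → ℝ := fun q => p (q - q0) + 1 / 2 * S (q - q0) (q - q0)

lemma qtest_contDiff (p : STS n →L[ℝ] ℝ) (S : STS n →L[ℝ] STS n →L[ℝ] ℝ) (q0 : STS n) :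
    ContDiff ℝ 2 (qtest p S q0) := by
  unfold qtest
  have h1 : ContDiff ℝ 2 (fun q : STS n => q - q0) := contDiff_id.sub contDiff_const
  exact (p.contDiff.comp h1).add (contDiff_const.mul
    ((S.contDiff.comp h1).clm_apply h1))

lemma qtest_fderiv (p : STS n →L[ℝ] ℝ) (S : STS n →L[ℝ] STS n →L[ℝ] ℝ)
    (hS : ∀ h k, S h k = S k h) (q0 q w : STS n) :
    fderiv ℝ (qtest p S q0) q w = p w + S w (q - q0) := by
  have h1 : HasFDerivAt (fun q : STS n => q - q0) (ContinuousLinearMap.id ℝ (STS n)) q :=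
    (hasFDerivAt_id q).sub_const q0
  have h2 := (p.hasFDerivAt (x := q - q0)).comp q h1
  have h3 := (S.hasFDerivAt (x := q - q0)).comp q h1
  have h4 := (h3.clm_apply h1).const_mul (1 / 2 : ℝ)
  have h5 := h2.add h4
  have h6 : HasFDerivAt (qtest p S q0) _ q := h5
  rw [h6.fderiv]
  simp
  rw [hS q w, hS q0 w]
  ring

lemma qtest_pt (p : STS n →L[ℝ] ℝ) (S : STS n →L[ℝ] STS n →L[ℝ] ℝ)
    (hS : ∀ h k, S h k = S k h) (q0 : STS n) : ptDeriv (qtest p S q0) q0 = p (1, 0) := by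
  rw [ptDeriv, qtest_fderiv p S hS]; simp

lemma qtest_grad (p : STS n →L[ℝ] ℝ) (S : STS n →L[ℝ] STS n →L[ℝ] ℝ)
    (hS : ∀ h k, S h k = S k h) (q0 : STS n) (ξ : EuclideanSpace ℝ (Fin n)) :
    inner ℝ (pxGrad (qtest p S q0) q0) ξ = p (0, ξ) := by
  have e : ((0:ℝ), ξ) = ∑ i, ξ i • ((0:ℝ), EuclideanSpace.single i (1:ℝ)) := by
    have : ξ = ∑ i, ξ i • EuclideanSpace.single i (1:ℝ) := by
      ext j; simp [Pi.single_apply, WithLp.ofLp_sum]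
    apply Prod.ext
    · simp [Prod.fst_sum]
    · simpa [Prod.snd_sum] using this
  rw [e, map_sum]
  simp only [pxGrad, PiLp.inner_apply]
  refine Finset.sum_congr rfl fun i _ => ?_
  change inner ℝ (fderiv ℝ (qtest p S q0) q0 (0, EuclideanSpace.single i 1)) (ξ i) = _
  rw [qtest_fderiv p S hS]
  simp only [sub_self, map_zero, add_zero, map_smul, smul_eq_mul]
  simp [mul_comm]

lemma qtest_hess (p : STS n →L[ℝ] ℝ) (S : STS n →L[ℝ] STS n →L[ℝ] ℝ)
    (hS : ∀ h k, S h k = S k h) (q0 : STS n) (i j : Fin n) :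
    pxHess (qtest p S q0) q0 i j =
      S (0, EuclideanSpace.single i 1) (0, EuclideanSpace.single j 1) := by
  unfold pxHess
  have : (fun q => fderiv ℝ (qtest p S q0) q (0, EuclideanSpace.single j 1)) =
      fun q => p (0, EuclideanSpace.single j 1) + S (0, EuclideanSpace.single j 1) (q - q0) := by
    funext q; exact qtest_fderiv p S hS _ _ _
  rw [this]
  have h1 : HasFDerivAt (fun q : STS n => q - q0) (ContinuousLinearMap.id ℝ (STS n)) q0 :=
    (hasFDerivAt_id q0).sub_const q0
  have h2 : HasFDerivAt (fun q => S (0, EuclideanSpace.single j 1) (q - q0))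
      ((S (0, EuclideanSpace.single j 1)).comp (ContinuousLinearMap.id ℝ (STS n))) q0 :=
    HasFDerivAt.comp (g := fun q => S (0, EuclideanSpace.single j 1) q)
      (f := fun q => q - q0) q0 ((S (0, EuclideanSpace.single j 1)).hasFDerivAt) h1
  have h3 := h2.const_add (p (0, EuclideanSpace.single j 1))
  rw [h3.fderiv]
  simp [hS (0, EuclideanSpace.single i 1)]

lemma one_d {α β : ℝ} (h : ∀ ε > 0, ∃ δ > 0, ∀ t : ℝ, |t| < δ → α * t + β * t ^ 2 ≤ ε * t ^ 2) :
    α = 0 ∧ β ≤ 0 := by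
  have hβ : β ≤ 0 := by
    refine le_of_forall_pos_le_add fun ε hε => ?_
    obtain ⟨δ, hδ, hb⟩ := h ε hε
    have h1 := hb (δ / 2) (by rw [abs_of_pos (by positivity)]; linarith)
    have h2 := hb (-(δ / 2)) (by rw [abs_neg, abs_of_pos (by positivity)]; linarith)
    have : β * (δ / 2) ^ 2 ≤ ε * (δ / 2) ^ 2 := by nlinarith
    have := le_of_mul_le_mul_right this (by positivity)
    linarith
  refine ⟨?_, hβ⟩
  obtain ⟨δ, hδ, hb⟩ := h 1 one_pos
  have key : |α| ≤ 0 := by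
    refine le_of_forall_pos_le_add fun ε hε => ?_
    set t := min (δ / 2) (ε / (1 - β)) with ht
    have htp : 0 < t := lt_min (by positivity) (div_pos hε (by linarith))
    have ht1 : t < δ := lt_of_le_of_lt (min_le_left _ _) (by linarith)
    have ht2 : (1 - β) * t ≤ ε := by
      have := min_le_right (δ / 2) (ε / (1 - β))
      rw [← ht, le_div_iff₀ (by linarith)] at this
      linarith
    have h1 := hb t (by rwa [abs_of_pos htp])
    have h2 := hb (-t) (by rwa [abs_neg, abs_of_pos htp])
    rw [zero_add, abs_le]
    constructor
    · have : (-α) * t ≤ ε * t := by nlinarith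
      have := le_of_mul_le_mul_right this htp
      linarith
    · have : α * t ≤ ε * t := by nlinarith
      exact le_of_mul_le_mul_right this htp
  exact abs_eq_zero.mp (le_antisymm key (abs_nonneg _))

/-- existence of maximizers in the sup-convolution -/
lemma supconv_exists {T : ℝ} (hT : 0 < T) {g : STS n → ℝ} {C0 : ℝ} (hg : ∀ q, |g q| ≤ C0)
    (husc : UpperSemicontinuousOn g (Icc 0 T ×ˢ univ)) {a b c : ℝ} (ha : 0 < a) (hb : 0 < b)
    (hc : 0 < c) (x0 : EuclideanSpace ℝ (Fin n)) (q : STS n) :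
    ∃ q' ∈ Icc (0:ℝ) T ×ˢ (univ : Set (EuclideanSpace ℝ (Fin n))),
      ∀ r ∈ Icc (0:ℝ) T ×ˢ (univ : Set (EuclideanSpace ℝ (Fin n))),
      g r - c * ‖r.2 - x0‖ ^ 2 - 3 / 2 * Wf n a b (q - r) (q - r) ≤
      g q' - c * ‖q'.2 - x0‖ ^ 2 - 3 / 2 * Wf n a b (q - q') (q - q') := by
  set R := (2 * C0 + 3 / 2 * Wf n a b (q - (0, x0)) (q - (0, x0))) / c + 1 with hR
  have hC0 : 0 ≤ C0 := (abs_nonneg _).trans (hg 0)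
  have hWn := Wf_nonneg (n := n) ha.le hb.le
  have hR1 : 1 ≤ R := by
    have := hWn (q - (0, x0))
    have : 0 ≤ (2 * C0 + 3 / 2 * Wf n a b (q - (0, x0)) (q - (0, x0))) / c := by positivity
    linarith
  have hRc : 2 * C0 + 3 / 2 * Wf n a b (q - (0, x0)) (q - (0, x0)) ≤ c * R := by
    rw [hR, mul_add, mul_div_cancel₀ _ hc.ne']; linarith
  have hcpt : IsCompact (Icc (0:ℝ) T ×ˢ Metric.closedBall x0 R) :=
    isCompact_Icc.prod (isCompact_closedBall x0 R)
  have hne : ((0:ℝ), x0) ∈ Icc (0:ℝ) T ×ˢ Metric.closedBall x0 R :=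
    ⟨⟨le_rfl, hT.le⟩, Metric.mem_closedBall_self (by linarith)⟩
  have husc' : UpperSemicontinuousOn
      (fun r : STS n => g r + (- c * ‖r.2 - x0‖ ^ 2 - 3 / 2 * Wf n a b (q - r) (q - r)))
      (Icc (0:ℝ) T ×ˢ Metric.closedBall x0 R) := by
    refine (husc.mono (prod_mono le_rfl (subset_univ _))).add ?_
    refine (Continuous.continuousOn ?_).upperSemicontinuousOn
    simp only [Wf_self]
    fun_prop
  obtain ⟨q', hq', hmax⟩ := husc'.exists_isMaxOn ⟨_, hne⟩ hcpt
  refine ⟨q', ⟨hq'.1, mem_univ _⟩, fun r hr => ?_⟩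
  by_cases hrR : r.2 ∈ Metric.closedBall x0 R
  · have := hmax (show r ∈ _ from ⟨hr.1, hrR⟩)
    simp only [mem_ofPred_eq] at this
    linarith
  · have h0 := hmax hne
    simp only [mem_ofPred_eq, sub_self, norm_zero] at h0
    have hd : R < ‖r.2 - x0‖ := by
      rw [Metric.mem_closedBall, dist_eq_norm, not_le] at hrR; exact hrR
    have h1 := (abs_le.mp (hg r)).2
    have h2 := (abs_le.mp (hg (0, x0))).1
    have h3 := hWn (q - r)
    have h4 : c * R ≤ c * ‖r.2 - x0‖ ^ 2 := by
      gcongr; nlinarith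
    linarith

end Doubling

section CI

lemma Wf_sub_swap (a b : ℝ) (d e : STS n) : Wf n a b (d - e) (d - e) = Wf n a b (e - d) (e - d) := by
  rw [← neg_sub e d]; simp only [map_neg, _root_.neg_apply, neg_neg]

lemma Wf_smul (a b t : ℝ) (d : STS n) : Wf n a b (t • d) (t • d) = t ^ 2 * Wf n a b d d := by
  simp; ring

lemma Wf_three {a b : ℝ} (ha : 0 ≤ a) (hb : 0 ≤ b) (d e f : STS n) :
    Wf n a b (d + e + f) (d + e + f) ≤ 3 * (Wf n a b d d + Wf n a b e e + Wf n a b f f) := by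
  have h1 := Wf_nonneg ha hb (d - e)
  have h2 := Wf_nonneg ha hb (d - f)
  have h3 := Wf_nonneg ha hb (e - f)
  simp only [map_add, map_sub, _root_.add_apply, _root_.sub_apply] at *
  linarith [Wf_symm a b d e, Wf_symm a b d f, Wf_symm a b e f]

/-- consequences of a second order expansion of a sup-convolution -/
lemma supconv_exp {K : Set (STS n)} {G U : STS n → ℝ} {m : STS n → STS n} {a b : ℝ}
    (hU : ∀ q, U q = G (m q) - 3 / 2 * Wf n a b (q - m q) (q - m q))
    (hm : ∀ q, m q ∈ K)
    (hmax : ∀ q, ∀ r ∈ K, G r - 3 / 2 * Wf n a b (q - r) (q - r) ≤ U q)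
    {q : STS n} {P : STS n →L[ℝ] ℝ} {S : STS n →L[ℝ] STS n →L[ℝ] ℝ}
    (hexp : ∀ ε > 0, ∃ δ > 0, ∀ h, ‖h‖ < δ →
      |U (q + h) - U q - P h - 1 / 2 * S h h| ≤ ε * ‖h‖ ^ 2) :
    (∀ h, P h = 3 * Wf n a b (m q - q) h) ∧ (∀ h, -3 * Wf n a b h h ≤ S h h) ∧
    ∀ ε > 0, ∃ δ > 0, ∀ h, ‖h‖ < δ → m q + h ∈ K →
      G (m q + h) ≤ G (m q) + P h + 1 / 2 * S h h + ε * ‖h‖ ^ 2 := by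
  have key : ∀ h, 3 * Wf n a b (m q - q) h - P h = 0 ∧
      - (1 / 2) * S h h - 3 / 2 * Wf n a b h h ≤ 0 := by
    intro h
    apply one_d
    intro ε hε
    obtain ⟨δ, hδ, hb⟩ := hexp (ε / (‖h‖ ^ 2 + 1)) (by positivity)
    refine ⟨δ / (‖h‖ + 1), by positivity, fun t ht => ?_⟩
    have hth : ‖t • h‖ < δ := by
      rw [norm_smul, Real.norm_eq_abs]
      rw [lt_div_iff₀ (by positivity)] at ht
      nlinarith [abs_nonneg t, norm_nonneg h]
    have h1 := (abs_le.mp (hb _ hth)).2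
    have h2 := hmax (q + t • h) (m q) (hm q)
    have h3 := hU q
    have h4 : q + t • h - m q = (q - m q) + t • h := by abel
    rw [h4, Wf_add, Wf_smul] at h2
    rw [norm_smul, mul_pow, Real.norm_eq_abs, sq_abs] at h1
    have h5 : ε / (‖h‖ ^ 2 + 1) * (t ^ 2 * ‖h‖ ^ 2) ≤ ε * t ^ 2 := by
      have : ‖h‖ ^ 2 / (‖h‖ ^ 2 + 1) ≤ 1 := by
        rw [div_le_one (by positivity)]; linarith
      calc _ = ε * t ^ 2 * (‖h‖ ^ 2 / (‖h‖ ^ 2 + 1)) := by ring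
        _ ≤ ε * t ^ 2 * 1 := by gcongr
        _ = _ := by ring
    simp only [map_smul, map_sub, _root_.smul_apply, _root_.sub_apply, smul_eq_mul] at *
    nlinarith
  refine ⟨fun h => by linarith [(key h).1], fun h => by linarith [(key h).2], fun ε hε => ?_⟩
  obtain ⟨δ, hδ, hb⟩ := hexp ε hε
  refine ⟨δ, hδ, fun h hh hK => ?_⟩
  have h1 := (abs_le.mp (hb _ hh)).2
  have h2 := hmax (q + h) _ hK
  have h3 := hU q
  have h4 : q + h - (m q + h) = q - m q := by abel
  rw [h4] at h2
  linarith

set_option maxHeartbeats 2000000 in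
lemma ci_doubling {T : ℝ} (hT : 0 < T) {g1 g2 : STS n → ℝ} {C0 : ℝ} (hg1 : ∀ q, |g1 q| ≤ C0)
    (hg2 : ∀ q, |g2 q| ≤ C0)
    (husc1 : UpperSemicontinuousOn g1 (Icc 0 T ×ˢ univ))
    (husc2 : UpperSemicontinuousOn g2 (Icc 0 T ×ˢ univ))
    {a b c c1 : ℝ} (ha : 0 < a) (hb : 0 < b) (hc : 0 < c) (hc1 : 0 < c1)
    (x1 x2 : EuclideanSpace ℝ (Fin n)) :
    ∃ q1 ∈ Icc (0:ℝ) T ×ˢ (univ : Set (EuclideanSpace ℝ (Fin n))),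
    ∃ q2 ∈ Icc (0:ℝ) T ×ˢ (univ : Set (EuclideanSpace ℝ (Fin n))),
    ∃ (P1 P2 : STS n →L[ℝ] ℝ) (S1 S2 : STS n →L[ℝ] STS n →L[ℝ] ℝ),
      (∀ h k, S1 h k = S1 k h) ∧ (∀ h k, S2 h k = S2 k h) ∧
      (∀ r1 ∈ Icc (0:ℝ) T ×ˢ (univ : Set (EuclideanSpace ℝ (Fin n))),
        ∀ r2 ∈ Icc (0:ℝ) T ×ˢ (univ : Set (EuclideanSpace ℝ (Fin n))),
        (g1 r1 - c * ‖r1.2 - x1‖ ^ 2) + (g2 r2 - c * ‖r2.2 - x2‖ ^ 2)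
          - 1 / 2 * Wf n a b (r1 - r2) (r1 - r2) ≤
        (g1 q1 - c * ‖q1.2 - x1‖ ^ 2) + (g2 q2 - c * ‖q2.2 - x2‖ ^ 2)
          - 1 / 2 * Wf n a b (q1 - q2) (q1 - q2) + c1) ∧
      (∀ h, |P1 h - Wf n a b (q1 - q2) h| ≤ c1 * ‖h‖) ∧
      (∀ h, |P2 h + Wf n a b (q1 - q2) h| ≤ c1 * ‖h‖) ∧
      (∀ h, -3 * Wf n a b h h ≤ S1 h h) ∧ (∀ h, -3 * Wf n a b h h ≤ S2 h h) ∧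
      (∀ h1 h2, S1 h1 h1 + S2 h2 h2 ≤ 3 * Wf n a b (h1 - h2) (h1 - h2)
        + c1 * (‖h1‖ ^ 2 + ‖h2‖ ^ 2)) ∧
      (∀ ε > 0, ∃ δ > 0, ∀ h, ‖h‖ < δ → q1 + h ∈ Icc (0:ℝ) T ×ˢ univ →
        g1 (q1 + h) - c * ‖(q1 + h).2 - x1‖ ^ 2 ≤
          g1 q1 - c * ‖q1.2 - x1‖ ^ 2 + P1 h + 1 / 2 * S1 h h + ε * ‖h‖ ^ 2) ∧
      (∀ ε > 0, ∃ δ > 0, ∀ h, ‖h‖ < δ → q2 + h ∈ Icc (0:ℝ) T ×ˢ univ →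
        g2 (q2 + h) - c * ‖(q2 + h).2 - x2‖ ^ 2 ≤
          g2 q2 - c * ‖q2.2 - x2‖ ^ 2 + P2 h + 1 / 2 * S2 h h + ε * ‖h‖ ^ 2) := by
  choose m1 hm1 hmax1 using supconv_exists hT hg1 husc1 ha hb hc x1
  choose m2 hm2 hmax2 using supconv_exists hT hg2 husc2 ha hb hc x2
  set K := Icc (0:ℝ) T ×ˢ (univ : Set (EuclideanSpace ℝ (Fin n))) with hK
  set G1 : STS n → ℝ := fun r => g1 r - c * ‖r.2 - x1‖ ^ 2 with hG1
  set G2 : STS n → ℝ := fun r => g2 r - c * ‖r.2 - x2‖ ^ 2 with hG2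
  set U1 : STS n → ℝ := fun q => G1 (m1 q) - 3 / 2 * Wf n a b (q - m1 q) (q - m1 q) with hU1
  set U2 : STS n → ℝ := fun q => G2 (m2 q) - 3 / 2 * Wf n a b (q - m2 q) (q - m2 q) with hU2
  have hM1 : ∀ q, ∀ r ∈ K, G1 r - 3 / 2 * Wf n a b (q - r) (q - r) ≤ U1 q := hmax1
  have hM2 : ∀ q, ∀ r ∈ K, G2 r - 3 / 2 * Wf n a b (q - r) (q - r) ≤ U2 q := hmax2
  have hWn := Wf_nonneg (n := n) ha.le hb.le
  set f : STS n × STS n → ℝ := fun z => U1 z.1 + U2 z.2 - 3 / 2 * Wf n a b (z.1 - z.2) (z.1 - z.2)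
    with hf
  have hU1B : ∀ q, U1 q ≤ C0 := by
    intro q
    have := (abs_le.mp (hg1 (m1 q))).2
    have := hWn (q - m1 q)
    have : 0 ≤ c * ‖(m1 q).2 - x1‖ ^ 2 := by positivity
    simp only [hU1, hG1]; linarith
  have hU2B : ∀ q, U2 q ≤ C0 := by
    intro q
    have := (abs_le.mp (hg2 (m2 q))).2
    have := hWn (q - m2 q)
    have : 0 ≤ c * ‖(m2 q).2 - x2‖ ^ 2 := by positivity
    simp only [hU2, hG2]; linarith
  have hB : ∀ z, f z ≤ 2 * C0 := by
    intro z
    have := hU1B z.1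
    have := hU2B z.2
    have := hWn (z.1 - z.2)
    simp only [hf]; linarith
  have hH : ∀ y, ∃ q : STS n × STS n →L[ℝ] ℝ, ∀ z,
      f y + q (z - y) - (9 * (a + b)) * ‖z - y‖ ^ 2 ≤ f z := by
    intro y
    refine ⟨(-3 : ℝ) • (Wf n a b (y.1 - m1 y.1)).comp (ContinuousLinearMap.fst ℝ _ _)
      + (-3 : ℝ) • (Wf n a b (y.2 - m2 y.2)).comp (ContinuousLinearMap.snd ℝ _ _)
      + (-3 : ℝ) • (Wf n a b (y.1 - y.2)).comp
        (ContinuousLinearMap.fst ℝ _ _ - ContinuousLinearMap.snd ℝ _ _), fun z => ?_⟩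
    obtain ⟨k, rfl⟩ : ∃ k, z = y + k := ⟨z - y, by abel⟩
    have e1 : y + k - y = k := by abel
    rw [e1]
    have h1 := hM1 (y.1 + k.1) (m1 y.1) (hm1 y.1)
    have h2 := hM2 (y.2 + k.2) (m2 y.2) (hm2 y.2)
    rw [show y.1 + k.1 - m1 y.1 = (y.1 - m1 y.1) + k.1 by abel, Wf_add] at h1
    rw [show y.2 + k.2 - m2 y.2 = (y.2 - m2 y.2) + k.2 by abel, Wf_add] at h2
    have h3 : f (y + k) = U1 (y.1 + k.1) + U2 (y.2 + k.2)
      - 3 / 2 * Wf n a b ((y.1 - y.2) + (k.1 - k.2)) ((y.1 - y.2) + (k.1 - k.2)) := by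
      rw [show (y.1 - y.2) + (k.1 - k.2) = (y.1 + k.1) - (y.2 + k.2) by abel]; rfl
    rw [Wf_add] at h3
    have h4 : f y = G1 (m1 y.1) - 3 / 2 * Wf n a b (y.1 - m1 y.1) (y.1 - m1 y.1)
      + (G2 (m2 y.2) - 3 / 2 * Wf n a b (y.2 - m2 y.2) (y.2 - m2 y.2))
      - 3 / 2 * Wf n a b (y.1 - y.2) (y.1 - y.2) := rfl
    have hab : 0 ≤ a + b := by linarith
    have w1 : Wf n a b k.1 k.1 ≤ (a + b) * ‖k‖ ^ 2 :=
      (Wf_le ha.le hb.le _).trans (by gcongr; exact norm_fst_le k)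
    have w2 : Wf n a b k.2 k.2 ≤ (a + b) * ‖k‖ ^ 2 :=
      (Wf_le ha.le hb.le _).trans (by gcongr; exact norm_snd_le k)
    have w3 : Wf n a b (k.1 - k.2) (k.1 - k.2) ≤ (a + b) * (2 * ‖k‖) ^ 2 :=
      (Wf_le ha.le hb.le _).trans (by
        gcongr
        exact (norm_sub_le _ _).trans (by linarith [norm_fst_le k, norm_snd_le k]))
    change f y + ((-3) * Wf n a b (y.1 - m1 y.1) k.1 + (-3) * Wf n a b (y.2 - m2 y.2) k.2 +
      (-3) * Wf n a b (y.1 - y.2) (k.1 - k.2)) - _ ≤ _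
    rw [h3, h4]
    nlinarith
  obtain ⟨y0, p, S, hSs, hp, hmaxf, hSle, hexp⟩ :=
    ja_main (C := 9 * (a + b)) (by positivity) hH hB hc1
  obtain ⟨q1, q2⟩ := y0
  set inl := ContinuousLinearMap.inl ℝ (STS n) (STS n) with hinl
  set inr := ContinuousLinearMap.inr ℝ (STS n) (STS n) with hinr
  set P1 : STS n →L[ℝ] ℝ := p.comp inl + (3 : ℝ) • Wf n a b (q1 - q2) with hP1
  set P2 : STS n →L[ℝ] ℝ := p.comp inr - (3 : ℝ) • Wf n a b (q1 - q2) with hP2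
  set S1 : STS n →L[ℝ] STS n →L[ℝ] ℝ := S.bilinearComp inl inl + (3 : ℝ) • Wf n a b with hS1
  set S2 : STS n →L[ℝ] STS n →L[ℝ] ℝ := S.bilinearComp inr inr + (3 : ℝ) • Wf n a b with hS2
  have P1e : ∀ h, P1 h = p (h, 0) + 3 * Wf n a b (q1 - q2) h := fun h => rfl
  have P2e : ∀ h, P2 h = p (0, h) - 3 * Wf n a b (q1 - q2) h := fun h => rfl
  have S1e : ∀ h k, S1 h k = S (h, 0) (k, 0) + 3 * Wf n a b h k := fun h k => rfl
  have S2e : ∀ h k, S2 h k = S (0, h) (0, k) + 3 * Wf n a b h k := fun h k => rfl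
  have hexp1 : ∀ ε > 0, ∃ δ > 0, ∀ h, ‖h‖ < δ →
      |U1 (q1 + h) - U1 q1 - P1 h - 1 / 2 * S1 h h| ≤ ε * ‖h‖ ^ 2 := by
    intro ε hε
    obtain ⟨δ, hδ, hb⟩ := hexp ε hε
    refine ⟨δ, hδ, fun h hh => ?_⟩
    have hn : ‖((h, 0) : STS n × STS n)‖ = ‖h‖ := by simp [Prod.norm_def]
    have h1 := hb (h, 0) (by rwa [hn])
    rw [hn] at h1
    have h2 : f ((q1, q2) + (h, 0)) = U1 (q1 + h) + U2 q2 -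
        3 / 2 * Wf n a b ((q1 - q2) + h) ((q1 - q2) + h) := by
      simp only [hf, Prod.mk_add_mk, add_zero]
      rw [show q1 + h - q2 = q1 - q2 + h by abel]
    have h3 : f (q1, q2) = U1 q1 + U2 q2 - 3 / 2 * Wf n a b (q1 - q2) (q1 - q2) := rfl
    rw [h2, h3, Wf_add] at h1
    rw [P1e, S1e]
    convert h1 using 2
    ring
  have hexp2 : ∀ ε > 0, ∃ δ > 0, ∀ h, ‖h‖ < δ →
      |U2 (q2 + h) - U2 q2 - P2 h - 1 / 2 * S2 h h| ≤ ε * ‖h‖ ^ 2 := by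
    intro ε hε
    obtain ⟨δ, hδ, hb⟩ := hexp ε hε
    refine ⟨δ, hδ, fun h hh => ?_⟩
    have hn : ‖((0, h) : STS n × STS n)‖ = ‖h‖ := by simp [Prod.norm_def]
    have h1 := hb (0, h) (by rwa [hn])
    rw [hn] at h1
    have h2 : f ((q1, q2) + (0, h)) = U1 q1 + U2 (q2 + h) -
        3 / 2 * Wf n a b ((q1 - q2) + -h) ((q1 - q2) + -h) := by
      simp only [hf, Prod.mk_add_mk, add_zero]
      rw [show q1 - (q2 + h) = q1 - q2 + -h by abel]
    have h3 : f (q1, q2) = U1 q1 + U2 q2 - 3 / 2 * Wf n a b (q1 - q2) (q1 - q2) := rfl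
    rw [h2, h3, Wf_add] at h1
    rw [P2e, S2e]
    convert h1 using 2
    simp only [map_neg, _root_.neg_apply]
    ring
  obtain ⟨A1, B1, D1⟩ := supconv_exp (fun q => rfl) hm1 hM1 hexp1
  obtain ⟨A2, B2, D2⟩ := supconv_exp (fun q => rfl) hm2 hM2 hexp2
  have hp1 : ∀ h, |p (h, 0)| ≤ c1 * ‖h‖ := fun h => by
    have := hp (h, 0)
    have hn : ‖((h, 0) : STS n × STS n)‖ = ‖h‖ := by simp [Prod.norm_def]
    rwa [hn] at this
  have hp2 : ∀ h, |p (0, h)| ≤ c1 * ‖h‖ := fun h => by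
    have := hp (0, h)
    have hn : ‖((0, h) : STS n × STS n)‖ = ‖h‖ := by simp [Prod.norm_def]
    rwa [hn] at this
  refine ⟨m1 q1, hm1 q1, m2 q2, hm2 q2, P1, P2, S1, S2, ?_, ?_, ?_, ?_, ?_, B1, B2, ?_, D1, D2⟩
  · intro h k; rw [S1e, S1e, hSs, Wf_symm]
  · intro h k; rw [S2e, S2e, hSs, Wf_symm]
  · intro r1 hr1 r2 hr2
    have h0 := hmaxf (r1 + (1 / 3 : ℝ) • (r2 - r1), r1 + (2 / 3 : ℝ) • (r2 - r1))
    have h1 := hM1 (r1 + (1 / 3 : ℝ) • (r2 - r1)) r1 hr1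
    have h2 := hM2 (r1 + (2 / 3 : ℝ) • (r2 - r1)) r2 hr2
    have e1 : r1 + (1 / 3 : ℝ) • (r2 - r1) - r1 = (-1 / 3 : ℝ) • (r1 - r2) := by module
    have e2 : r1 + (2 / 3 : ℝ) • (r2 - r1) - r2 = (1 / 3 : ℝ) • (r1 - r2) := by module
    have e3 : r1 + (1 / 3 : ℝ) • (r2 - r1) - (r1 + (2 / 3 : ℝ) • (r2 - r1))
      = (1 / 3 : ℝ) • (r1 - r2) := by module
    rw [e1, Wf_smul] at h1
    rw [e2, Wf_smul] at h2
    simp only [hf] at h0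
    rw [e3, Wf_smul] at h0
    have h4 := Wf_three ha.le hb.le (m1 q1 - q1) (q1 - q2) (q2 - m2 q2)
    rw [show m1 q1 - q1 + (q1 - q2) + (q2 - m2 q2) = m1 q1 - m2 q2 by abel,
      Wf_sub_swap a b (m1 q1)] at h4
    have h5 : U1 q1 = G1 (m1 q1) - 3 / 2 * Wf n a b (q1 - m1 q1) (q1 - m1 q1) := rfl
    have h6 : U2 q2 = G2 (m2 q2) - 3 / 2 * Wf n a b (q2 - m2 q2) (q2 - m2 q2) := rfl
    change G1 r1 + G2 r2 - 1 / 2 * Wf n a b (r1 - r2) (r1 - r2) ≤ G1 (m1 q1) + G2 (m2 q2)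
      - 1 / 2 * Wf n a b (m1 q1 - m2 q2) (m1 q1 - m2 q2) + c1
    rw [Wf_sub_swap a b (m2 q2)] at h4
    rw [Wf_sub_swap a b (m1 q1) q1] at h4
    linarith
  · intro h
    have h1 := A1 h
    have h2 := A2 h
    have h3 := P1e h
    have h4 := P2e h
    have e : P1 h - Wf n a b (m1 q1 - m2 q2) h = (2 * p (h, 0) + p (0, h)) / 3 := by
      have e0 : ∀ x y : STS n, Wf n a b (x - y) h = Wf n a b x h - Wf n a b y h := fun x y => by
        rw [map_sub]; rfl
      rw [e0] at h1 h2 h3 h4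
      rw [e0]
      linarith
    rw [e]
    have := abs_le.mp (hp1 h)
    have := abs_le.mp (hp2 h)
    rw [abs_le]; constructor <;> linarith
  · intro h
    have h1 := A1 h
    have h2 := A2 h
    have h3 := P1e h
    have h4 := P2e h
    have e : P2 h + Wf n a b (m1 q1 - m2 q2) h = (p (h, 0) + 2 * p (0, h)) / 3 := by
      have e0 : ∀ x y : STS n, Wf n a b (x - y) h = Wf n a b x h - Wf n a b y h := fun x y => by
        rw [map_sub]; rfl
      rw [e0] at h1 h2 h3 h4
      rw [e0]
      linarith
    rw [e]
    have := abs_le.mp (hp1 h)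
    have := abs_le.mp (hp2 h)
    rw [abs_le]; constructor <;> linarith
  · intro h1 h2
    have key : (0:ℝ) = 0 ∧ 1 / 2 * (S1 h1 h1 + S2 h2 h2 - 3 * Wf n a b (h1 - h2) (h1 - h2)
        - S (h1, h2) (h1, h2)) ≤ 0 := by
      apply one_d
      intro ε hε
      set M := ‖((h1, h2) : STS n × STS n)‖ with hM
      have hM0 : 0 ≤ M := norm_nonneg _
      have hMa : ‖h1‖ ≤ M := norm_fst_le ((h1, h2) : STS n × STS n)
      have hMb : ‖h2‖ ≤ M := norm_snd_le ((h1, h2) : STS n × STS n)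
      set ε' := ε / (3 * (M ^ 2 + 1)) with hε'
      have hε'p : 0 < ε' := by positivity
      have hε'M : 3 * ε' * M ^ 2 ≤ ε := by
        have : 3 * ε' * (M ^ 2 + 1) = ε := by rw [hε']; field_simp
        nlinarith
      obtain ⟨δ1, hδ1, hb1⟩ := hexp1 ε' hε'p
      obtain ⟨δ2, hδ2, hb2⟩ := hexp2 ε' hε'p
      obtain ⟨δ3, hδ3, hb3⟩ := hexp ε' hε'p
      refine ⟨min δ1 (min δ2 δ3) / (M + 1), by positivity, fun t ht => ?_⟩
      rw [lt_div_iff₀ (by positivity)] at ht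
      have ht1 : |t| * (M + 1) < δ1 := ht.trans_le (min_le_left _ _)
      have ht2 : |t| * (M + 1) < δ2 := ht.trans_le ((min_le_right _ _).trans (min_le_left _ _))
      have ht3 : |t| * (M + 1) < δ3 := ht.trans_le ((min_le_right _ _).trans (min_le_right _ _))
      have ht0 := abs_nonneg t
      have k1 := (abs_le.mp (hb1 (t • h1) (by
        rw [norm_smul, Real.norm_eq_abs]; nlinarith))).1
      have k2 := (abs_le.mp (hb2 (t • h2) (by
        rw [norm_smul, Real.norm_eq_abs]; nlinarith))).1
      have k3 := (abs_le.mp (hb3 (t • (h1, h2)) (by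
        rw [norm_smul, Real.norm_eq_abs]; nlinarith))).2
      have f1 : f ((q1, q2) + t • (h1, h2)) = U1 (q1 + t • h1) + U2 (q2 + t • h2)
          - 3 / 2 * Wf n a b ((q1 - q2) + t • (h1 - h2)) ((q1 - q2) + t • (h1 - h2)) := by
        simp only [hf, Prod.mk_add_mk, Prod.smul_mk]
        rw [show q1 + t • h1 - (q2 + t • h2) = q1 - q2 + t • (h1 - h2) by module]
      have f2 : f (q1, q2) = U1 q1 + U2 q2 - 3 / 2 * Wf n a b (q1 - q2) (q1 - q2) := rfl
      rw [f1, f2, Wf_add, Wf_smul] at k3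
      have hpp : p (h1, h2) = p (h1, 0) + p (0, h2) := by rw [← map_add]; simp
      have g1' := P1e h1
      have g2' := P2e h2
      have hs1 : ‖t • h1‖ ^ 2 ≤ t ^ 2 * M ^ 2 := by
        rw [norm_smul, mul_pow, Real.norm_eq_abs, sq_abs]; gcongr
      have hs2 : ‖t • h2‖ ^ 2 ≤ t ^ 2 * M ^ 2 := by
        rw [norm_smul, mul_pow, Real.norm_eq_abs, sq_abs]; gcongr
      have hs3 : ‖t • ((h1, h2) : STS n × STS n)‖ ^ 2 = t ^ 2 * M ^ 2 := by
        rw [norm_smul, mul_pow, Real.norm_eq_abs, sq_abs]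
      rw [hs3] at k3
      have k1' := mul_le_mul_of_nonneg_left hs1 hε'p.le
      have k2' := mul_le_mul_of_nonneg_left hs2 hε'p.le
      have k4 := mul_le_mul_of_nonneg_right hε'M (sq_nonneg t)
      have ex : Wf n a b (q1 - q2) (h1 - h2) = Wf n a b (q1 - q2) h1 - Wf n a b (q1 - q2) h2 :=
        map_sub _ _ _
      simp only [map_smul, _root_.smul_apply, smul_eq_mul] at k1 k2 k3
      rw [ex, hpp] at k3
      rw [g1'] at k1
      rw [g2'] at k2
      nlinarith
    have h3 := hSle (h1, h2)
    have h4 : ‖((h1, h2) : STS n × STS n)‖ ^ 2 ≤ ‖h1‖ ^ 2 + ‖h2‖ ^ 2 := by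
      rw [Prod.norm_def]
      rcases max_cases ‖((h1, h2) : STS n × STS n).1‖ ‖((h1, h2) : STS n × STS n).2‖ with h | h
      · rw [h.1]; nlinarith [sq_nonneg ‖h2‖]
      · rw [h.1]; nlinarith [sq_nonneg ‖h1‖]
    have h5 := mul_le_mul_of_nonneg_left h4 hc1.le
    linarith [key.2]

end CI

section Visc

/-- spatial Hessian matrix of a quadratic form -/
noncomputable def hessM (S : STS n →L[ℝ] STS n →L[ℝ] ℝ) : Matrix (Fin n) (Fin n) ℝ :=
  fun i j => S (0, EuclideanSpace.single i 1) (0, EuclideanSpace.single j 1)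

lemma sts_expand (ξ : Fin n → ℝ) : ((0:ℝ), (WithLp.toLp 2 ξ : EuclideanSpace ℝ (Fin n))) =
    ∑ i, ξ i • ((0:ℝ), EuclideanSpace.single i (1:ℝ)) := by
  have : (WithLp.toLp 2 ξ : EuclideanSpace ℝ (Fin n)) =
      ∑ i, ξ i • EuclideanSpace.single i (1:ℝ) := by
    ext j; simp [Pi.single_apply, WithLp.ofLp_sum]
  apply Prod.ext
  · simp [Prod.fst_sum]
  · simpa [Prod.snd_sum] using this

lemma hessM_form (S : STS n →L[ℝ] STS n →L[ℝ] ℝ) (ξ : Fin n → ℝ) :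
    ξ ⬝ᵥ (hessM S).mulVec ξ = S (0, WithLp.toLp 2 ξ) (0, WithLp.toLp 2 ξ) := by
  rw [sts_expand]
  simp only [map_sum, map_smul, _root_.sum_apply, _root_.smul_apply, smul_eq_mul,
    dotProduct, mulVec, hessM, Finset.mul_sum]
  rw [Finset.sum_comm]
  refine Finset.sum_congr rfl fun i _ => Finset.sum_congr rfl fun j _ => ?_
  ring

lemma sts_norm_toLp (ξ : Fin n → ℝ) :
    ‖((0:ℝ), (WithLp.toLp 2 ξ : EuclideanSpace ℝ (Fin n)))‖ ^ 2 = ∑ i, ξ i ^ 2 := by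
  have : ‖((0:ℝ), (WithLp.toLp 2 ξ : EuclideanSpace ℝ (Fin n)))‖ =
    ‖(WithLp.toLp 2 ξ : EuclideanSpace ℝ (Fin n))‖ := by simp [Prod.norm_def]
  rw [this, EuclideanSpace.norm_sq_eq]
  simp

lemma Wf_toLp (a b : ℝ) (ξ : Fin n → ℝ) :
    Wf n a b (0, WithLp.toLp 2 ξ) (0, WithLp.toLp 2 ξ) = a * ∑ i, ξ i ^ 2 := by
  rw [Wf_self, EuclideanSpace.norm_sq_eq]; simp

lemma sub_test {T : ℝ} {F : ℝ → EuclideanSpace ℝ (Fin n) → ℝ → EuclideanSpace ℝ (Fin n) →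
      Matrix (Fin n) (Fin n) ℝ → ℝ} {u : STS n → ℝ}
    (hsub : ∀ ψ : ℝ × EuclideanSpace ℝ (Fin n) → ℝ, ContDiff ℝ 2 ψ →
      ∀ t₀ ∈ Set.Ioc 0 T, ∀ x₀,
      IsLocalMaxOn (fun q => u q - ψ q) (Set.Ioc 0 T ×ˢ Set.univ) (t₀, x₀) →
      ptDeriv ψ (t₀, x₀) - F t₀ x₀ (u (t₀, x₀)) (pxGrad ψ (t₀, x₀)) (pxHess ψ (t₀, x₀)) ≤ 0)
    {q : STS n} (hq0 : 0 < q.1) (hqT : q.1 ≤ T) {P : STS n →L[ℝ] ℝ}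
    {S : STS n →L[ℝ] STS n →L[ℝ] ℝ} (hS : ∀ h k, S h k = S k h)
    (hloc : ∃ δ > 0, ∀ h, ‖h‖ < δ → q + h ∈ Icc (0:ℝ) T ×ˢ univ →
      u (q + h) ≤ u q + P h + 1 / 2 * S h h) :
    ∃ g, (∀ ξ, inner ℝ g ξ = P (0, ξ)) ∧ P (1, 0) ≤ F q.1 q.2 (u q) g (hessM S) := by
  refine ⟨pxGrad (qtest P S q) q, qtest_grad P S hS q, ?_⟩
  have h := hsub (qtest P S q) (qtest_contDiff P S q) q.1 ⟨hq0, hqT⟩ q.2 (by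
    obtain ⟨δ, hδ, hb⟩ := hloc
    change ∀ᶠ r in nhdsWithin q (Set.Ioc 0 T ×ˢ Set.univ), u r - qtest P S q r ≤ u q - qtest P S q q
    filter_upwards [self_mem_nhdsWithin, mem_nhdsWithin_of_mem_nhds (Metric.ball_mem_nhds q hδ)]
      with r hr hr2
    have h1 := hb (r - q) (by rwa [mem_ball_iff_norm] at hr2)
      (by rw [add_sub_cancel]; exact ⟨⟨hr.1.1.le, hr.1.2⟩, mem_univ _⟩)
    rw [add_sub_cancel] at h1
    simp only [qtest, sub_self, map_zero, mul_zero]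
    linarith)
  change ptDeriv (qtest P S q) q - F q.1 q.2 (u q) (pxGrad (qtest P S q) q)
    (pxHess (qtest P S q) q) ≤ 0 at h
  have hH : pxHess (qtest P S q) q = hessM S := by
    ext i j; exact qtest_hess P S hS q i j
  rw [qtest_pt P S hS, hH] at h
  linarith

lemma super_test {T : ℝ} {F : ℝ → EuclideanSpace ℝ (Fin n) → ℝ → EuclideanSpace ℝ (Fin n) →
      Matrix (Fin n) (Fin n) ℝ → ℝ} {v : STS n → ℝ}
    (hsuper : ∀ ψ : ℝ × EuclideanSpace ℝ (Fin n) → ℝ, ContDiff ℝ 2 ψ →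
      ∀ t₀ ∈ Set.Ioc 0 T, ∀ x₀,
      IsLocalMinOn (fun q => v q - ψ q) (Set.Ioc 0 T ×ˢ Set.univ) (t₀, x₀) →
      0 ≤ ptDeriv ψ (t₀, x₀) -
        F t₀ x₀ (v (t₀, x₀)) (pxGrad ψ (t₀, x₀)) (pxHess ψ (t₀, x₀)))
    {q : STS n} (hq0 : 0 < q.1) (hqT : q.1 ≤ T) {P : STS n →L[ℝ] ℝ}
    {S : STS n →L[ℝ] STS n →L[ℝ] ℝ} (hS : ∀ h k, S h k = S k h)
    (hloc : ∃ δ > 0, ∀ h, ‖h‖ < δ → q + h ∈ Icc (0:ℝ) T ×ˢ univ →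
      v q + P h + 1 / 2 * S h h ≤ v (q + h)) :
    ∃ g, (∀ ξ, inner ℝ g ξ = P (0, ξ)) ∧ F q.1 q.2 (v q) g (hessM S) ≤ P (1, 0) := by
  refine ⟨pxGrad (qtest P S q) q, qtest_grad P S hS q, ?_⟩
  have h := hsuper (qtest P S q) (qtest_contDiff P S q) q.1 ⟨hq0, hqT⟩ q.2 (by
    obtain ⟨δ, hδ, hb⟩ := hloc
    change ∀ᶠ r in nhdsWithin q (Set.Ioc 0 T ×ˢ Set.univ), v q - qtest P S q q ≤ v r - qtest P S q r
    filter_upwards [self_mem_nhdsWithin, mem_nhdsWithin_of_mem_nhds (Metric.ball_mem_nhds q hδ)]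
      with r hr hr2
    have h1 := hb (r - q) (by rwa [mem_ball_iff_norm] at hr2)
      (by rw [add_sub_cancel]; exact ⟨⟨hr.1.1.le, hr.1.2⟩, mem_univ _⟩)
    rw [add_sub_cancel] at h1
    simp only [qtest, sub_self, map_zero, mul_zero]
    linarith)
  change 0 ≤ ptDeriv (qtest P S q) q - F q.1 q.2 (v q) (pxGrad (qtest P S q) q)
    (pxHess (qtest P S q) q) at h
  have hH : pxHess (qtest P S q) q = hessM S := by
    ext i j; exact qtest_hess P S hS q i j
  rw [qtest_pt P S hS, hH] at h
  linarith

/-- turning the penalised expansion into a quadratic test function -/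
lemma pen_test {T : ℝ} {g : STS n → ℝ} {q : STS n} {c : ℝ} (hc : 0 < c)
    {x0 : EuclideanSpace ℝ (Fin n)} {P : STS n →L[ℝ] ℝ} {S : STS n →L[ℝ] STS n →L[ℝ] ℝ}
    (D : ∀ ε > 0, ∃ δ > 0, ∀ h, ‖h‖ < δ → q + h ∈ Icc (0:ℝ) T ×ˢ univ →
        g (q + h) - c * ‖(q + h).2 - x0‖ ^ 2 ≤
          g q - c * ‖q.2 - x0‖ ^ 2 + P h + 1 / 2 * S h h + ε * ‖h‖ ^ 2) :
    ∃ δ > 0, ∀ h, ‖h‖ < δ → q + h ∈ Icc (0:ℝ) T ×ˢ univ →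
      g (q + h) ≤ g q + (P + Wf n (2 * c) 0 (0, q.2 - x0)) h +
        1 / 2 * (S + Wf n (4 * c) (2 * c)) h h := by
  obtain ⟨δ, hδ, hb⟩ := D c hc
  refine ⟨δ, hδ, fun h hh hK => ?_⟩
  have h1 := hb h hh hK
  have h2 := STS_norm_le h
  have h3 := mul_le_mul_of_nonneg_left h2 hc.le
  have h4 : ‖(q + h).2 - x0‖ ^ 2 = ‖q.2 - x0‖ ^ 2 + 2 * inner ℝ (q.2 - x0) h.2 + ‖h.2‖ ^ 2 := by
    rw [← norm_add_sq_real, Prod.snd_add]; congr 2; abel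
  rw [h4] at h1
  simp only [_root_.add_apply]
  rw [Wf_apply, Wf_self]
  rw [Wf_self] at h3
  dsimp only
  linarith

lemma sq_norm_grad {g d : EuclideanSpace ℝ (Fin n)} {k : ℝ} (hk : 0 ≤ k)
    (h : ∀ ξ, |inner ℝ (g - d) ξ| ≤ k * ‖ξ‖) : ‖g - d‖ ≤ k := by
  have h1 := (le_abs_self _).trans (h (g - d))
  rw [real_inner_self_eq_norm_sq] at h1
  by_contra! h2
  nlinarith [norm_nonneg (g - d)]

lemma visc_pair {T : ℝ} (hT : 0 < T)
    {F : ℝ → EuclideanSpace ℝ (Fin n) → ℝ → EuclideanSpace ℝ (Fin n) →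
      Matrix (Fin n) (Fin n) ℝ → ℝ} {u v : STS n → ℝ} {C0 : ℝ}
    (hub : ∀ p, |u p| ≤ C0) (hvb : ∀ p, |v p| ≤ C0)
    (husc : UpperSemicontinuousOn u (Set.Icc 0 T ×ˢ Set.univ))
    (hlsc : LowerSemicontinuousOn v (Set.Icc 0 T ×ˢ Set.univ))
    (hsub : ∀ ψ : ℝ × EuclideanSpace ℝ (Fin n) → ℝ, ContDiff ℝ 2 ψ →
      ∀ t₀ ∈ Set.Ioc 0 T, ∀ x₀,
      IsLocalMaxOn (fun q => u q - ψ q) (Set.Ioc 0 T ×ˢ Set.univ) (t₀, x₀) →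
      ptDeriv ψ (t₀, x₀) - F t₀ x₀ (u (t₀, x₀)) (pxGrad ψ (t₀, x₀)) (pxHess ψ (t₀, x₀)) ≤ 0)
    (hsuper : ∀ ψ : ℝ × EuclideanSpace ℝ (Fin n) → ℝ, ContDiff ℝ 2 ψ →
      ∀ t₀ ∈ Set.Ioc 0 T, ∀ x₀,
      IsLocalMinOn (fun q => v q - ψ q) (Set.Ioc 0 T ×ˢ Set.univ) (t₀, x₀) →
      0 ≤ ptDeriv ψ (t₀, x₀) -
        F t₀ x₀ (v (t₀, x₀)) (pxGrad ψ (t₀, x₀)) (pxHess ψ (t₀, x₀)))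
    {a b c : ℝ} (ha : 0 < a) (hb : 0 < b) (hc : 0 < c)
    {t0 : ℝ} (ht0 : t0 ∈ Icc 0 T) (x1 x2 : EuclideanSpace ℝ (Fin n)) {m : ℝ}
    (hm : m + c ≤ u (t0, x1) - v (t0, x2) - a / 2 * ‖x1 - x2‖ ^ 2)
    (hpos : ∀ q1 ∈ Icc (0:ℝ) T ×ˢ (univ : Set (EuclideanSpace ℝ (Fin n))),
      ∀ q2 ∈ Icc (0:ℝ) T ×ˢ (univ : Set (EuclideanSpace ℝ (Fin n))),
      m ≤ (u q1 - c * ‖q1.2 - x1‖ ^ 2) + (-v q2 - c * ‖q2.2 - x2‖ ^ 2)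
          - 1 / 2 * Wf n a b (q1 - q2) (q1 - q2) → 0 < q1.1 ∧ 0 < q2.1) :
    ∃ q1 ∈ Icc (0:ℝ) T ×ˢ (univ : Set (EuclideanSpace ℝ (Fin n))),
    ∃ q2 ∈ Icc (0:ℝ) T ×ˢ (univ : Set (EuclideanSpace ℝ (Fin n))),
    ∃ (g1 g2 : EuclideanSpace ℝ (Fin n)) (X Y : Matrix (Fin n) (Fin n) ℝ),
      m ≤ (u q1 - c * ‖q1.2 - x1‖ ^ 2) + (-v q2 - c * ‖q2.2 - x2‖ ^ 2)
          - 1 / 2 * Wf n a b (q1 - q2) (q1 - q2) ∧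
      ‖g1 - a • (q1.2 - q2.2)‖ ≤ c + 2 * c * ‖q1.2 - x1‖ ∧
      ‖g2 - a • (q1.2 - q2.2)‖ ≤ c + 2 * c * ‖q2.2 - x2‖ ∧
      (∀ i j, X i j = X j i) ∧ (∀ i j, Y i j = Y j i) ∧
      (∀ ξ : Fin n → ℝ, -(3 * a) * ∑ i, ξ i ^ 2 ≤ ξ ⬝ᵥ X.mulVec ξ) ∧
      (∀ ξ : Fin n → ℝ, -(3 * a) * ∑ i, ξ i ^ 2 ≤ - (ξ ⬝ᵥ Y.mulVec ξ)) ∧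
      (∀ ξ η : Fin n → ℝ, ξ ⬝ᵥ X.mulVec ξ - η ⬝ᵥ Y.mulVec η ≤
        3 * a * ∑ i, (ξ i - η i) ^ 2 + c * (∑ i, ξ i ^ 2 + ∑ i, η i ^ 2)) ∧
      - (2 * c) ≤ F q1.1 q1.2 (u q1) g1 (X + (4 * c) • (1 : Matrix (Fin n) (Fin n) ℝ)) -
        F q2.1 q2.2 (v q2) g2 (Y - (4 * c) • (1 : Matrix (Fin n) (Fin n) ℝ)) := by
  obtain ⟨q1, hq1, q2, hq2, P1, P2, S1, S2, hS1, hS2, hmax, hP1, hP2, hB1, hB2, hS12, D1, D2⟩ :=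
    ci_doubling hT (g1 := u) (g2 := fun q => - v q) hub (fun q => by rw [abs_neg]; exact hvb q)
      husc hlsc.neg ha hb hc hc x1 x2
  have hnear : m ≤ (u q1 - c * ‖q1.2 - x1‖ ^ 2) + (-v q2 - c * ‖q2.2 - x2‖ ^ 2)
          - 1 / 2 * Wf n a b (q1 - q2) (q1 - q2) := by
    have h := hmax (t0, x1) ⟨ht0, mem_univ _⟩ (t0, x2) ⟨ht0, mem_univ _⟩
    rw [Wf_self, Prod.mk_sub_mk] at h
    simp only [sub_self, norm_zero] at h
    linarith
  obtain ⟨hp1, hp2⟩ := hpos q1 hq1 q2 hq2 hnear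
  have hSs1 : ∀ h k, (S1 + Wf n (4 * c) (2 * c)) h k = (S1 + Wf n (4 * c) (2 * c)) k h := by
    intro h k; simp only [_root_.add_apply]; rw [hS1, Wf_symm]
  have hSs2 : ∀ h k, (-(S2 + Wf n (4 * c) (2 * c))) h k = (-(S2 + Wf n (4 * c) (2 * c))) k h := by
    intro h k; simp only [_root_.add_apply, _root_.neg_apply]; rw [hS2, Wf_symm]
  obtain ⟨g1, hg1, hF1⟩ := sub_test hsub hp1 hq1.1.2 hSs1 (pen_test hc D1)
  obtain ⟨g2, hg2, hF2⟩ := super_test hsuper hp2 hq2.1.2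
    (P := -(P2 + Wf n (2 * c) 0 (0, q2.2 - x2))) hSs2 (by
      obtain ⟨δ, hδ, h⟩ := pen_test (g := fun q => - v q) hc D2
      refine ⟨δ, hδ, fun k hk hK => ?_⟩
      have := h k hk hK
      simp only [_root_.neg_apply, ge_iff_le] at this ⊢
      linarith)
  have hWone : ∀ (a b : ℝ) i j, Wf n a b (0, EuclideanSpace.single i 1)
      (0, EuclideanSpace.single j 1) = (a • (1 : Matrix (Fin n) (Fin n) ℝ)) i j := by
    intro a b i j
    rw [Wf_apply]
    by_cases hij : i = j
    · subst hij; simp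
    · simp [hij, EuclideanSpace.inner_single_left, Pi.single_apply]
  have hns : ∀ ξ : EuclideanSpace ℝ (Fin n), ‖((0:ℝ), ξ)‖ = ‖ξ‖ := fun ξ => by
    simp [Prod.norm_def]
  have e1 : hessM (S1 + Wf n (4 * c) (2 * c)) =
      hessM S1 + (4 * c) • (1 : Matrix (Fin n) (Fin n) ℝ) := by
    ext i j
    rw [Matrix.add_apply, ← hWone (4 * c) (2 * c)]; rfl
  have e2 : hessM (-(S2 + Wf n (4 * c) (2 * c))) =
      hessM (-S2) - (4 * c) • (1 : Matrix (Fin n) (Fin n) ℝ) := by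
    ext i j
    rw [Matrix.sub_apply, ← hWone (4 * c) (2 * c)]
    simp only [hessM, _root_.neg_apply, _root_.add_apply]; ring
  rw [e1] at hF1
  rw [e2] at hF2
  refine ⟨q1, hq1, q2, hq2, g1, g2, hessM S1, hessM (-S2), hnear, ?_, ?_, ?_, ?_, ?_, ?_, ?_, ?_⟩
  · refine sq_norm_grad (by positivity) fun ξ => ?_
    rw [inner_sub_left, hg1]
    have h1 := abs_le.mp (hP1 (0, ξ))
    rw [hns, Wf_apply] at h1
    simp only [_root_.add_apply, Wf_apply, inner_smul_left, Prod.snd_sub] at *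
    have h2 := abs_le.mp (abs_real_inner_le_norm (q1.2 - x1) ξ)
    simp only [mul_zero, add_zero, conj_trivial] at *
    rw [abs_le]
    constructor <;> nlinarith
  · refine sq_norm_grad (by positivity) fun ξ => ?_
    rw [inner_sub_left, hg2]
    have h1 := abs_le.mp (hP2 (0, ξ))
    rw [hns, Wf_apply] at h1
    simp only [_root_.add_apply, _root_.neg_apply, Wf_apply, inner_smul_left, Prod.snd_sub] at *
    have h2 := abs_le.mp (abs_real_inner_le_norm (q2.2 - x2) ξ)
    simp only [mul_zero, add_zero, conj_trivial] at *
    rw [abs_le]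
    constructor <;> nlinarith
  · intro i j; exact hS1 _ _
  · intro i j
    simp only [hessM, _root_.neg_apply]; rw [hS2]
  · intro ξ
    rw [hessM_form]
    have := hB1 (0, WithLp.toLp 2 ξ)
    rw [Wf_toLp] at this
    linarith
  · intro ξ
    rw [hessM_form]
    have := hB2 (0, WithLp.toLp 2 ξ)
    rw [Wf_toLp] at this
    simp only [_root_.neg_apply]
    linarith
  · intro ξ η
    rw [hessM_form, hessM_form]
    have := hS12 (0, WithLp.toLp 2 ξ) (0, WithLp.toLp 2 η)
    rw [Prod.mk_sub_mk, sub_zero, ← WithLp.toLp_sub, Wf_toLp, sts_norm_toLp, sts_norm_toLp] at this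
    simp only [_root_.neg_apply, Pi.sub_apply] at *
    linarith
  · have h1 := abs_le.mp (hP1 (1, 0))
    have h2 := abs_le.mp (hP2 (1, 0))
    have hn1 : ‖((1:ℝ), (0 : EuclideanSpace ℝ (Fin n)))‖ = 1 := by simp [Prod.norm_def]
    rw [hn1] at h1 h2
    have hz : ∀ d : EuclideanSpace ℝ (Fin n), Wf n (2 * c) 0 (0, d) (1, 0) = 0 := fun d => by
      rw [Wf_apply]; simp
    simp only [_root_.add_apply, _root_.neg_apply, hz] at hF1 hF2
    linarith

end Visc

section Core

lemma choose_b {T : ℝ} {g1 g2 : STS n → ℝ} {C0 : ℝ} (hg1 : ∀ q, |g1 q| ≤ C0)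
    (hg2 : ∀ q, |g2 q| ≤ C0)
    (husc1 : UpperSemicontinuousOn g1 (Icc 0 T ×ˢ univ))
    (husc2 : UpperSemicontinuousOn g2 (Icc 0 T ×ˢ univ))
    {a c : ℝ} (ha : 0 < a) (hc : 0 < c) (x1 x2 : EuclideanSpace ℝ (Fin n)) {m : ℝ}
    {Bad : Set (STS n × STS n)} (hBad : IsClosed Bad)
    (hgood : ∀ t ∈ Icc 0 T, ∀ x y, m ≤ g1 (t, x) + g2 (t, y) - a / 2 * ‖x - y‖ ^ 2 →
      ((t, x), (t, y)) ∉ Bad) :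
    ∃ b > 0, ∀ q1 ∈ Icc (0:ℝ) T ×ˢ (univ : Set (EuclideanSpace ℝ (Fin n))),
      ∀ q2 ∈ Icc (0:ℝ) T ×ˢ (univ : Set (EuclideanSpace ℝ (Fin n))),
      m ≤ (g1 q1 - c * ‖q1.2 - x1‖ ^ 2) + (g2 q2 - c * ‖q2.2 - x2‖ ^ 2)
          - 1 / 2 * Wf n a b (q1 - q2) (q1 - q2) → (q1, q2) ∉ Bad := by
  by_contra! hcon
  have hk : ∀ k : ℕ, (0:ℝ) < (k:ℝ) + 1 := fun k => by positivity
  choose s1 hs1 s2 hs2 hs hsB using fun k : ℕ => hcon ((k:ℝ) + 1) (hk k)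
  have hC0 : 0 ≤ C0 := (abs_nonneg _).trans (hg1 0)
  set Q := 2 * C0 + |m| with hQ
  have hQ0 : 0 ≤ Q := by positivity
  have hsum : ∀ k, c * ‖(s1 k).2 - x1‖ ^ 2 + c * ‖(s2 k).2 - x2‖ ^ 2 +
      1 / 2 * (a * ‖(s1 k).2 - (s2 k).2‖ ^ 2 + ((k:ℝ) + 1) * ((s1 k).1 - (s2 k).1) ^ 2) ≤ Q := by
    intro k
    have h := hs k
    rw [Wf_self] at h
    have h1 := (abs_le.mp (hg1 (s1 k))).2
    have h2 := (abs_le.mp (hg2 (s2 k))).2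
    have h3 := neg_abs_le m
    simp only [Prod.snd_sub, Prod.fst_sub] at h
    linarith
  set ρ := Q / c + 1 with hρ
  have hcρ : c * ρ = Q + c := by rw [hρ]; field_simp
  have hρ1 : 1 ≤ ρ := by
    have : 0 ≤ Q / c := by positivity
    linarith
  have hball : ∀ d : ℝ, 0 ≤ d → c * d ^ 2 ≤ Q → d ≤ ρ := by
    intro d hd h
    by_contra! h'
    have : ρ < d ^ 2 := by nlinarith
    nlinarith
  have hterm : ∀ k, 0 ≤ a * ‖(s1 k).2 - (s2 k).2‖ ^ 2 ∧
      0 ≤ ((k:ℝ) + 1) * ((s1 k).1 - (s2 k).1) ^ 2 ∧ 0 ≤ c * ‖(s1 k).2 - x1‖ ^ 2 ∧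
      0 ≤ c * ‖(s2 k).2 - x2‖ ^ 2 := fun k => by
    refine ⟨?_, ?_, ?_, ?_⟩ <;> positivity
  have hcpt : IsCompact ((Icc (0:ℝ) T ×ˢ Metric.closedBall x1 ρ) ×ˢ
      (Icc (0:ℝ) T ×ˢ Metric.closedBall x2 ρ)) :=
    (isCompact_Icc.prod (isCompact_closedBall _ _)).prod
      (isCompact_Icc.prod (isCompact_closedBall _ _))
  have hin : ∀ k, (s1 k, s2 k) ∈ (Icc (0:ℝ) T ×ˢ Metric.closedBall x1 ρ) ×ˢ
      (Icc (0:ℝ) T ×ˢ Metric.closedBall x2 ρ) := by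
    intro k
    obtain ⟨a1, a2, a3, a4⟩ := hterm k
    have := hsum k
    refine ⟨⟨(hs1 k).1, ?_⟩, ⟨(hs2 k).1, ?_⟩⟩
    · rw [Metric.mem_closedBall, dist_eq_norm]
      exact hball _ (norm_nonneg _) (by linarith)
    · rw [Metric.mem_closedBall, dist_eq_norm]
      exact hball _ (norm_nonneg _) (by linarith)
  obtain ⟨⟨q1, q2⟩, hqin, φ, hφ, hlim⟩ := hcpt.tendsto_subseq hin
  have hl1 : Tendsto (fun k => s1 (φ k)) atTop (nhds q1) :=
    (continuous_fst.tendsto _).comp hlim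
  have hl2 : Tendsto (fun k => s2 (φ k)) atTop (nhds q2) :=
    (continuous_snd.tendsto _).comp hlim
  have hqB : (q1, q2) ∈ Bad := hBad.mem_of_tendsto hlim (Eventually.of_forall fun k => hsB _)
  have hq1K : q1 ∈ Icc (0:ℝ) T ×ˢ (univ : Set (EuclideanSpace ℝ (Fin n))) := ⟨hqin.1.1, mem_univ _⟩
  have hq2K : q2 ∈ Icc (0:ℝ) T ×ˢ (univ : Set (EuclideanSpace ℝ (Fin n))) := ⟨hqin.2.1, mem_univ _⟩
  -- equal times
  have htime : q1.1 = q2.1 := by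
    have h1 : Tendsto (fun k => ((s1 (φ k)).1 - (s2 (φ k)).1) ^ 2) atTop
        (nhds ((q1.1 - q2.1) ^ 2)) :=
      (((continuous_fst.tendsto _).comp hl1).sub ((continuous_fst.tendsto _).comp hl2)).pow 2
    have h2 : Tendsto (fun k => ((s1 (φ k)).1 - (s2 (φ k)).1) ^ 2) atTop (nhds 0) := by
      have h3 : Tendsto (fun k : ℕ => 2 * Q / ((k:ℝ) + 1)) atTop (nhds 0) :=
        tendsto_const_nhds.div_atTop
          (tendsto_atTop_add_const_right _ _ tendsto_natCast_atTop_atTop)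
      refine squeeze_zero (fun k => sq_nonneg _) (fun k => ?_) (h3.comp hφ.tendsto_atTop)
      obtain ⟨a1, a2, a3, a4⟩ := hterm (φ k)
      have := hsum (φ k)
      simp only [Function.comp]
      rw [le_div_iff₀ (hk _)]
      linarith
    have := tendsto_nhds_unique h1 h2
    have := pow_eq_zero_iff (two_ne_zero) |>.mp this
    linarith
  have hval : m ≤ g1 q1 + g2 q2 - a / 2 * ‖q1.2 - q2.2‖ ^ 2 := by
    have hn : Tendsto (fun k => a / 2 * ‖(s1 (φ k)).2 - (s2 (φ k)).2‖ ^ 2) atTop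
        (nhds (a / 2 * ‖q1.2 - q2.2‖ ^ 2)) :=
      ((((continuous_snd.tendsto _).comp hl1).sub
        ((continuous_snd.tendsto _).comp hl2)).norm.pow 2).const_mul _
    refine le_of_forall_pos_le_add fun ε hε => ?_
    have hl1' : Tendsto (fun k => s1 (φ k)) atTop (nhdsWithin q1 (Icc 0 T ×ˢ univ)) :=
      tendsto_nhdsWithin_iff.mpr ⟨hl1, Eventually.of_forall fun k => hs1 _⟩
    have hl2' : Tendsto (fun k => s2 (φ k)) atTop (nhdsWithin q2 (Icc 0 T ×ˢ univ)) :=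
      tendsto_nhdsWithin_iff.mpr ⟨hl2, Eventually.of_forall fun k => hs2 _⟩
    have u1 := hl1'.eventually (husc1 q1 hq1K (g1 q1 + ε / 2) (by linarith))
    have u2 := hl2'.eventually (husc2 q2 hq2K (g2 q2 + ε / 2) (by linarith))
    have hfin : a / 2 * ‖q1.2 - q2.2‖ ^ 2 ≤ g1 q1 + g2 q2 + ε - m := by
      refine le_of_tendsto hn ?_
      filter_upwards [u1, u2] with k k1 k2
      obtain ⟨a1, a2, a3, a4⟩ := hterm (φ k)
      have h := hs (φ k)
      rw [Wf_self] at h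
      simp only [Prod.snd_sub, Prod.fst_sub] at h
      linarith
    linarith
  obtain ⟨t1, y1⟩ := q1
  obtain ⟨t2, y2⟩ := q2
  simp only at htime
  subst htime
  exact hgood t1 hq1K.1 y1 y2 hval hqB

lemma entry_bound {X : Matrix (Fin n) (Fin n) ℝ} {L : ℝ} (hs : ∀ i j, X i j = X j i)
    (h : ∀ ξ : Fin n → ℝ, |ξ ⬝ᵥ X.mulVec ξ| ≤ L * ∑ i, ξ i ^ 2) (i j : Fin n) :
    |X i j| ≤ 3 * L := by
  have hsing : ∀ i, |X i i| ≤ L := fun i => by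
    have := h (Pi.single i 1)
    simpa [Pi.single_apply, ite_pow] using this
  have hL : 0 ≤ L := (abs_nonneg _).trans (hsing i)
  have h1 := h (Pi.single i 1 + Pi.single j 1)
  have e : (Pi.single i 1 + Pi.single j 1 : Fin n → ℝ) ⬝ᵥ
      X.mulVec (Pi.single i 1 + Pi.single j 1) = X i i + X j j + 2 * X i j := by
    simp only [mulVec_add, add_dotProduct, dotProduct_add]
    simp
    rw [hs j i]; ring
  have e2 : ∑ k, (Pi.single i 1 + Pi.single j 1 : Fin n → ℝ) k ^ 2 ≤ 4 := by
    calc _ ≤ ∑ k, (2 * (Pi.single i 1 : Fin n → ℝ) k ^ 2 + 2 * (Pi.single j 1 : Fin n → ℝ) k ^ 2) := by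
          gcongr with k
          rw [Pi.add_apply]
          nlinarith [sq_nonneg ((Pi.single i 1 : Fin n → ℝ) k - (Pi.single j 1 : Fin n → ℝ) k)]
      _ = 4 := by
        rw [Finset.sum_add_distrib]
        simp [Pi.single_apply, ite_pow]; norm_num
  rw [e] at h1
  have h2 := abs_le.mp (h1.trans (mul_le_mul_of_nonneg_left e2 hL))
  have h3 := abs_le.mp (hsing i)
  have h4 := abs_le.mp (hsing j)
  rw [abs_le]; constructor <;> linarith

lemma dot_one_smul (c : ℝ) (ξ : Fin n → ℝ) :
    ξ ⬝ᵥ (c • (1 : Matrix (Fin n) (Fin n) ℝ)).mulVec ξ = c * ∑ i, ξ i ^ 2 := by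
  rw [smul_mulVec, one_mulVec, dotProduct_smul, smul_eq_mul]
  simp [dotProduct, sq]

lemma mat_fix {a c : ℝ} (ha : 0 < a) (hc : 0 < c) {X Y : Matrix (Fin n) (Fin n) ℝ}
    (hXs : ∀ i j, X i j = X j i) (hYs : ∀ i j, Y i j = Y j i)
    (hX : ∀ ξ : Fin n → ℝ, -(3 * a) * ∑ i, ξ i ^ 2 ≤ ξ ⬝ᵥ X.mulVec ξ)
    (hY : ∀ ξ : Fin n → ℝ, -(3 * a) * ∑ i, ξ i ^ 2 ≤ - (ξ ⬝ᵥ Y.mulVec ξ))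
    (hXY : ∀ ξ η : Fin n → ℝ, ξ ⬝ᵥ X.mulVec ξ - η ⬝ᵥ Y.mulVec η ≤
        3 * a * ∑ i, (ξ i - η i) ^ 2 + c * (∑ i, ξ i ^ 2 + ∑ i, η i ^ 2)) :
    ∃ X' Y' : Matrix (Fin n) (Fin n) ℝ, (Y' - X').PosSemidef ∧
      (∀ ξ η : Fin n → ℝ,
          -(3 * a) * ((∑ i, ξ i ^ 2) + ∑ i, η i ^ 2)
              ≤ ξ ⬝ᵥ X'.mulVec ξ - η ⬝ᵥ Y'.mulVec η ∧
          ξ ⬝ᵥ X'.mulVec ξ - η ⬝ᵥ Y'.mulVec η ≤ 3 * a * ∑ i, (ξ i - η i) ^ 2) ∧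
      (∀ i j, |(X + (4 * c) • (1 : Matrix (Fin n) (Fin n) ℝ)) i j| ≤ 9 * a + 15 * c) ∧
      (∀ i j, |(Y - (4 * c) • (1 : Matrix (Fin n) (Fin n) ℝ)) i j| ≤ 9 * a + 15 * c) ∧
      (∀ i j, |X' i j| ≤ 9 * a + 15 * c) ∧ (∀ i j, |Y' i j| ≤ 9 * a + 15 * c) ∧
      (∀ i j, |(X + (4 * c) • (1 : Matrix (Fin n) (Fin n) ℝ)) i j - X' i j| ≤ 8 * c) ∧
      (∀ i j, |(Y - (4 * c) • (1 : Matrix (Fin n) (Fin n) ℝ)) i j - Y' i j| ≤ 8 * c) := by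
  set κ := 3 * a / (3 * a + c) with hκ
  have hκe : κ * (3 * a + c) = 3 * a := by rw [hκ]; field_simp
  have hκ0 : 0 < κ := by positivity
  have hκ1 : κ ≤ 1 := by rw [hκ, div_le_one (by positivity)]; linarith
  have hz : (0 : Fin n → ℝ) ⬝ᵥ X.mulVec 0 = 0 := by simp
  have hz' : (0 : Fin n → ℝ) ⬝ᵥ Y.mulVec 0 = 0 := by simp
  have hsq : ∀ ξ : Fin n → ℝ, 0 ≤ ∑ i, ξ i ^ 2 := fun ξ => Finset.sum_nonneg fun i _ => sq_nonneg _
  have bX : ∀ i j, |X i j| ≤ 3 * (3 * a + c) := entry_bound hXs fun ξ => by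
    have h1 := hXY ξ 0
    have h2 := hX ξ
    have h3 := hsq ξ
    simp at h1
    rw [abs_le]
    constructor <;> nlinarith
  have bY : ∀ i j, |Y i j| ≤ 3 * (3 * a + c) := entry_bound hYs fun ξ => by
    have h1 := hXY 0 ξ
    have h2 := hY ξ
    have h3 := hsq ξ
    simp at h1
    rw [abs_le]
    constructor <;> nlinarith
  have hone : ∀ i j, |(1 : Matrix (Fin n) (Fin n) ℝ) i j| ≤ 1 := fun i j => by
    rw [Matrix.one_apply]; split_ifs <;> simp
  set X' : Matrix (Fin n) (Fin n) ℝ := κ • (X - c • (1 : Matrix (Fin n) (Fin n) ℝ)) with hX'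
  set Y' : Matrix (Fin n) (Fin n) ℝ := κ • (Y + c • (1 : Matrix (Fin n) (Fin n) ℝ)) with hY'
  have fX : ∀ ξ : Fin n → ℝ, ξ ⬝ᵥ X'.mulVec ξ = κ * (ξ ⬝ᵥ X.mulVec ξ - c * ∑ i, ξ i ^ 2) := by
    intro ξ
    rw [hX', smul_mulVec, dotProduct_smul, sub_mulVec, dotProduct_sub, dot_one_smul, smul_eq_mul]
  have fY : ∀ ξ : Fin n → ℝ, ξ ⬝ᵥ Y'.mulVec ξ = κ * (ξ ⬝ᵥ Y.mulVec ξ + c * ∑ i, ξ i ^ 2) := by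
    intro ξ
    rw [hY', smul_mulVec, dotProduct_smul, add_mulVec, dotProduct_add, dot_one_smul, smul_eq_mul]
  have hstr : ∀ ξ η : Fin n → ℝ,
          -(3 * a) * ((∑ i, ξ i ^ 2) + ∑ i, η i ^ 2)
              ≤ ξ ⬝ᵥ X'.mulVec ξ - η ⬝ᵥ Y'.mulVec η ∧
          ξ ⬝ᵥ X'.mulVec ξ - η ⬝ᵥ Y'.mulVec η ≤ 3 * a * ∑ i, (ξ i - η i) ^ 2 := by
    intro ξ η
    rw [fX, fY]
    have h1 := hX ξ
    have h2 := hY η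
    have h3 := hXY ξ η
    have h4 : 0 ≤ ∑ i, (ξ i - η i) ^ 2 := hsq (fun i => ξ i - η i)
    constructor
    · calc _ = κ * (-(3 * a + c) * ((∑ i, ξ i ^ 2) + ∑ i, η i ^ 2)) := by
            linear_combination ((∑ i, ξ i ^ 2) + ∑ i, η i ^ 2) * hκe
        _ ≤ κ * (ξ ⬝ᵥ X.mulVec ξ - η ⬝ᵥ Y.mulVec η - c * ((∑ i, ξ i ^ 2) + ∑ i, η i ^ 2)) := by
            gcongr; linarith
        _ = _ := by ring
    · calc _ = κ * (ξ ⬝ᵥ X.mulVec ξ - η ⬝ᵥ Y.mulVec η - c * ((∑ i, ξ i ^ 2) + ∑ i, η i ^ 2)) := by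
            ring
        _ ≤ κ * (3 * a * ∑ i, (ξ i - η i) ^ 2) := by gcongr; linarith
        _ ≤ 1 * (3 * a * ∑ i, (ξ i - η i) ^ 2) := by gcongr
        _ = _ := by ring
  have dX : ∀ i j, |(X + (4 * c) • (1 : Matrix (Fin n) (Fin n) ℝ)) i j - X' i j| ≤ 8 * c := by
    intro i j
    have e : (X + (4 * c) • (1 : Matrix (Fin n) (Fin n) ℝ)) i j - X' i j =
      (1 - κ) * X i j + (4 + κ) * c * (1 : Matrix (Fin n) (Fin n) ℝ) i j := by
      simp only [hX', Matrix.add_apply, Matrix.sub_apply, Matrix.smul_apply, smul_eq_mul]; ring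
    rw [e]
    calc _ ≤ (1 - κ) * |X i j| + (4 + κ) * c * |(1 : Matrix (Fin n) (Fin n) ℝ) i j| := by
          refine (abs_add_le _ _).trans_eq ?_
          rw [abs_mul, abs_mul, abs_of_nonneg (by linarith : 0 ≤ 1 - κ),
            abs_of_nonneg (by positivity : 0 ≤ (4 + κ) * c)]
      _ ≤ (1 - κ) * (3 * (3 * a + c)) + (4 + 1) * c * 1 := by
          have := bX i j
          have := hone i j
          have : 0 ≤ 1 - κ := by linarith
          gcongr
      _ = _ := by linear_combination -3 * hκe
  have dY : ∀ i j, |(Y - (4 * c) • (1 : Matrix (Fin n) (Fin n) ℝ)) i j - Y' i j| ≤ 8 * c := by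
    intro i j
    have e : (Y - (4 * c) • (1 : Matrix (Fin n) (Fin n) ℝ)) i j - Y' i j =
      (1 - κ) * Y i j + -((4 + κ) * c * (1 : Matrix (Fin n) (Fin n) ℝ) i j) := by
      simp only [hY', Matrix.add_apply, Matrix.sub_apply, Matrix.smul_apply, smul_eq_mul]; ring
    rw [e]
    calc _ ≤ (1 - κ) * |Y i j| + (4 + κ) * c * |(1 : Matrix (Fin n) (Fin n) ℝ) i j| := by
          refine (abs_add_le _ _).trans_eq ?_
          rw [abs_neg, abs_mul, abs_mul, abs_of_nonneg (by linarith : 0 ≤ 1 - κ),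
            abs_of_nonneg (by positivity : 0 ≤ (4 + κ) * c)]
      _ ≤ (1 - κ) * (3 * (3 * a + c)) + (4 + 1) * c * 1 := by
          have := bY i j
          have := hone i j
          have : 0 ≤ 1 - κ := by linarith
          gcongr
      _ = _ := by linear_combination -3 * hκe
  have b1 : ∀ i j, |(X + (4 * c) • (1 : Matrix (Fin n) (Fin n) ℝ)) i j| ≤ 9 * a + 7 * c := by
    intro i j
    rw [Matrix.add_apply, Matrix.smul_apply, smul_eq_mul]
    have h1 := abs_le.mp (bX i j)
    have h2 := abs_le.mp (hone i j)
    rw [abs_le]; constructor <;> nlinarith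
  have b2 : ∀ i j, |(Y - (4 * c) • (1 : Matrix (Fin n) (Fin n) ℝ)) i j| ≤ 9 * a + 7 * c := by
    intro i j
    rw [Matrix.sub_apply, Matrix.smul_apply, smul_eq_mul]
    have h1 := abs_le.mp (bY i j)
    have h2 := abs_le.mp (hone i j)
    rw [abs_le]; constructor <;> nlinarith
  refine ⟨X', Y', ?_, hstr, fun i j => by linarith [b1 i j], fun i j => by linarith [b2 i j],
    fun i j => ?_, fun i j => ?_, dX, dY⟩
  · refine PosSemidef.of_dotProduct_mulVec_nonneg ?_ fun ξ => ?_
    · ext i j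
      simp only [hX', hY', conjTranspose_apply, Matrix.add_apply, Matrix.sub_apply,
        Matrix.smul_apply, smul_eq_mul, star_trivial, Matrix.one_apply, eq_comm (a := j)]
      rw [hXs j i, hYs j i]
    · have := (hstr ξ ξ).2
      simp only [sub_self] at this
      rw [star_trivial, sub_mulVec, dotProduct_sub]
      simp at this
      linarith
  · have h1 := abs_le.mp (b1 i j)
    have h2 := abs_le.mp (dX i j)
    rw [abs_le]; constructor <;> linarith
  · have h1 := abs_le.mp (b2 i j)
    have h2 := abs_le.mp (dY i j)
    rw [abs_le]; constructor <;> linarith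

/-- choice of the penalisation parameter -/
lemma choose_a {M : ℝ → ℝ} {lo hi η : ℝ} (hη : 0 < η) (hlo : ∀ a > 0, lo ≤ M a)
    (hhi : ∀ a > 0, M a ≤ hi) : ∃ a ≥ (1:ℝ), M (a / 2) ≤ M a + η := by
  by_contra! h
  have hk : ∀ k : ℕ, M (2 ^ k) ≤ hi - k * η := by
    intro k
    induction k with
    | zero => simpa using hhi 1 one_pos
    | succ k ih =>
      have h1 := h (2 ^ (k + 1)) (one_le_pow₀ (by norm_num))
      rw [show (2:ℝ) ^ (k + 1) / 2 = 2 ^ k by rw [pow_succ]; ring] at h1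
      push_cast
      linarith
  obtain ⟨k, hk2⟩ := exists_nat_gt ((hi - lo) / η)
  rw [div_lt_iff₀ hη] at hk2
  have := hk k
  have := hlo (2 ^ k) (by positivity)
  linarith

end Core

set_option maxHeartbeats 1000000 in
lemma core_est (T : ℝ) (hT : 0 < T)
    (F : ℝ → EuclideanSpace ℝ (Fin n) → ℝ → EuclideanSpace ℝ (Fin n) →
      Matrix (Fin n) (Fin n) ℝ → ℝ)
    (hFcont : Continuous (fun q : ℝ × EuclideanSpace ℝ (Fin n) × ℝ ×
      EuclideanSpace ℝ (Fin n) × Matrix (Fin n) (Fin n) ℝ =>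
        F q.1 q.2.1 q.2.2.1 q.2.2.2.1 q.2.2.2.2))
    (hFell : ∀ t x r p (X Y : Matrix (Fin n) (Fin n) ℝ), (Y - X).PosSemidef →
      F t x r p X ≤ F t x r p Y)
    (γ : ℝ) (hγ : 0 < γ)
    (hFproper : ∀ t x p X r s, s ≤ r → γ * (r - s) ≤ F t x s p X - F t x r p X)
    (hFstruct : ∀ R > (0:ℝ), ∃ θ : ℝ → ℝ, (∀ s, 0 ≤ θ s) ∧
      Tendsto θ (nhdsWithin 0 (Set.Ioi 0)) (nhds 0) ∧
      ∀ t ∈ Set.Icc 0 T, ∀ (x xt : EuclideanSpace ℝ (Fin n)) (r a : ℝ)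
        (X Y : Matrix (Fin n) (Fin n) ℝ), |r| ≤ R → 0 < a →
        (∀ ξ η : Fin n → ℝ,
          -(3 * a) * ((∑ i, ξ i ^ 2) + ∑ i, η i ^ 2)
              ≤ ξ ⬝ᵥ X.mulVec ξ - η ⬝ᵥ Y.mulVec η ∧
          ξ ⬝ᵥ X.mulVec ξ - η ⬝ᵥ Y.mulVec η ≤ 3 * a * ∑ i, (ξ i - η i) ^ 2) →
        F t x r (a • (x - xt)) X - F t xt r (a • (x - xt)) Y
          ≤ θ (a * ‖x - xt‖ ^ 2 + ‖x - xt‖))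
    (hFuc : ∀ R > (0:ℝ), ∀ δ > (0:ℝ), ∃ η > (0:ℝ), ∀ t t' x x' r r' p p'
      (X X' : Matrix (Fin n) (Fin n) ℝ),
      t ∈ Set.Icc 0 T → t' ∈ Set.Icc 0 T →
      |r| ≤ R → |r'| ≤ R → ‖p‖ ≤ R → ‖p'‖ ≤ R →
      (∀ i j, |X i j| ≤ R) → (∀ i j, |X' i j| ≤ R) →
      |t - t'| < η → ‖x - x'‖ < η → |r - r'| < η → ‖p - p'‖ < η →
      (∀ i j, |X i j - X' i j| < η) →
      |F t x r p X - F t' x' r' p' X'| < δ)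
    (u v : ℝ × EuclideanSpace ℝ (Fin n) → ℝ)
    (hub : ∃ C, ∀ p, |u p| ≤ C) (hvb : ∃ C, ∀ p, |v p| ≤ C)
    (husc : UpperSemicontinuousOn u (Set.Icc 0 T ×ˢ Set.univ))
    (hlsc : LowerSemicontinuousOn v (Set.Icc 0 T ×ˢ Set.univ))
    (hsub : ∀ ψ : ℝ × EuclideanSpace ℝ (Fin n) → ℝ, ContDiff ℝ 2 ψ →
      ∀ t₀ ∈ Set.Ioc 0 T, ∀ x₀,
      IsLocalMaxOn (fun q => u q - ψ q) (Set.Ioc 0 T ×ˢ Set.univ) (t₀, x₀) →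
      ptDeriv ψ (t₀, x₀) - F t₀ x₀ (u (t₀, x₀)) (pxGrad ψ (t₀, x₀)) (pxHess ψ (t₀, x₀)) ≤ 0)
    (hsuper : ∀ ψ : ℝ × EuclideanSpace ℝ (Fin n) → ℝ, ContDiff ℝ 2 ψ →
      ∀ t₀ ∈ Set.Ioc 0 T, ∀ x₀,
      IsLocalMinOn (fun q => v q - ψ q) (Set.Ioc 0 T ×ˢ Set.univ) (t₀, x₀) →
      0 ≤ ptDeriv ψ (t₀, x₀) -
        F t₀ x₀ (v (t₀, x₀)) (pxGrad ψ (t₀, x₀)) (pxHess ψ (t₀, x₀)))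
    (hu0 : UniformContinuous (fun x => u (0, x)))
    (hv0 : UniformContinuous (fun x => v (0, x)))
    (hinit : ∀ x, u (0, x) ≤ v (0, x)) :
    ∀ μ > (0:ℝ), ∃ a > (0:ℝ), ∀ t ∈ Set.Icc 0 T, ∀ x y : EuclideanSpace ℝ (Fin n),
      u (t, x) - v (t, y) - a / 2 * ‖x - y‖ ^ 2 ≤ μ := by
  intro μ hμ
  by_contra! hcon
  obtain ⟨Cu, hCu⟩ := hub
  obtain ⟨Cv, hCv⟩ := hvb
  obtain ⟨C0, hC01, hub, hvb⟩ : ∃ C0 ≥ (1:ℝ), (∀ p, |u p| ≤ C0) ∧ ∀ p, |v p| ≤ C0 :=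
    ⟨max 1 (max Cu Cv), le_max_left _ _,
      fun p => (hCu p).trans ((le_max_left _ _).trans (le_max_right _ _)),
      fun p => (hCv p).trans ((le_max_right _ _).trans (le_max_right _ _))⟩
  -- the sup
  set Z : ℝ → Set ℝ := fun a => {r | ∃ t ∈ Set.Icc 0 T, ∃ x y : EuclideanSpace ℝ (Fin n),
    r = u (t, x) - v (t, y) - a / 2 * ‖x - y‖ ^ 2} with hZ
  set M : ℝ → ℝ := fun a => sSup (Z a) with hM
  have hbdd : ∀ a > 0, ∀ r ∈ Z a, r ≤ 2 * C0 := by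
    rintro a ha r ⟨t, ht, x, y, rfl⟩
    have h1 := (abs_le.mp (hub (t, x))).2
    have h2 := (abs_le.mp (hvb (t, y))).1
    have h3 : 0 ≤ a / 2 * ‖x - y‖ ^ 2 := by positivity
    linarith
  have hle : ∀ a > 0, ∀ t ∈ Set.Icc 0 T, ∀ x y : EuclideanSpace ℝ (Fin n),
      u (t, x) - v (t, y) - a / 2 * ‖x - y‖ ^ 2 ≤ M a := fun a ha t ht x y =>
    le_csSup ⟨2 * C0, hbdd a ha⟩ ⟨t, ht, x, y, rfl⟩
  have hne : ∀ a, (Z a).Nonempty := fun a => ⟨_, 0, ⟨le_rfl, hT.le⟩, 0, 0, rfl⟩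
  have hMhi : ∀ a > 0, M a ≤ 2 * C0 := fun a ha => csSup_le (hne a) (hbdd a ha)
  have hMlo : ∀ a > 0, μ ≤ M a := fun a ha => by
    obtain ⟨t, ht, x, y, h⟩ := hcon a ha
    exact h.le.trans (hle a ha t ht x y)
  -- moduli
  obtain ⟨θ, hθ0, hθ, hstr⟩ := hFstruct C0 (by linarith)
  obtain ⟨d2, hd2, hd2θ⟩ : ∃ d2 > (0:ℝ), ∀ s, 0 < s → s < d2 → θ s < γ * μ / 8 := by
    have := hθ.eventually (gt_mem_nhds (show (0:ℝ) < γ * μ / 8 by positivity))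
    rw [eventually_nhdsWithin_iff, Metric.eventually_nhds_iff] at this
    obtain ⟨d, hd, h⟩ := this
    refine ⟨d, hd, fun s hs1 hs2 => h ?_ hs1⟩
    rw [Real.dist_eq, sub_zero, abs_of_pos hs1]; exact hs2
  obtain ⟨d3, hd3, hd3u⟩ := Metric.uniformContinuous_iff.mp hu0 (μ / 2) (by positivity)
  set η := min (d3 ^ 2 / 16) (min (d2 / 40) (d2 ^ 2 / 100)) with hη
  have hηp : 0 < η := by positivity
  have hη1 : 16 * η ≤ d3 ^ 2 := by
    have : η ≤ d3 ^ 2 / 16 := min_le_left _ _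
    linarith
  have hη2 : 40 * η ≤ d2 := by
    have : η ≤ d2 / 40 := (min_le_right _ _).trans (min_le_left _ _)
    linarith
  have hη3 : 100 * η ≤ d2 ^ 2 := by
    have : η ≤ d2 ^ 2 / 100 := (min_le_right _ _).trans (min_le_right _ _)
    linarith
  obtain ⟨a, ha1, haM⟩ := choose_a hηp hMlo hMhi
  have ha : 0 < a := by linarith
  -- uniform continuity of `F`
  obtain ⟨η1, hη1p, hUC⟩ := hFuc (C0 + 10 * a + 16 * η + 20) (by positivity) (γ * μ / 16)
    (by positivity)
  -- the small parameter
  obtain ⟨c, hc, hc1, hcη, hcμ, hcγ, hcη1, hcs⟩ : ∃ c > (0:ℝ), c ≤ 1 / 2 ∧ 2 * c ≤ η ∧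
      2 * c ≤ μ / 2 ∧ c ≤ γ * μ / 32 ∧ 8 * c < η1 ∧ c + 2 * √(2 * C0 * c) < min 1 η1 := by
    have hev : ∀ᶠ c in nhdsWithin (0:ℝ) (Set.Ioi 0), c + 2 * √(2 * C0 * c) < min 1 η1 := by
      have : Tendsto (fun c : ℝ => c + 2 * √(2 * C0 * c)) (nhdsWithin (0:ℝ) (Set.Ioi 0)) (nhds 0) := by
        have h : Continuous (fun c : ℝ => c + 2 * √(2 * C0 * c)) := by fun_prop
        have := (h.tendsto 0).mono_left (nhdsWithin_le_nhds (s := Set.Ioi 0))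
        simpa using this
      exact this.eventually (gt_mem_nhds (by positivity))
    have hsm : ∀ e > (0:ℝ), ∀ᶠ c in nhdsWithin (0:ℝ) (Set.Ioi 0), c < e := fun e he =>
      (nhdsWithin_le_nhds (gt_mem_nhds he))
    obtain ⟨c, h0, h1, h2, h3, h4, h5, h6⟩ := (((self_mem_nhdsWithin : Set.Ioi (0:ℝ) ∈ _)) |>
      fun h => (Filter.Eventually.and h <| (hsm (1 / 2) (by positivity)).and <|
      (hsm (η / 2) (by positivity)).and <| (hsm (μ / 4) (by positivity)).and <|
      (hsm (γ * μ / 32) (by positivity)).and <| (hsm (η1 / 8) (by positivity)).and hev)).exists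
    exact ⟨c, h0, h1.le, by linarith, by linarith, h4.le, by linarith, h6⟩
  obtain ⟨_, ⟨t0, ht0, x1, x2, rfl⟩, hx⟩ := exists_lt_of_lt_csSup (hne a)
    (show M a - c < sSup (Z a) by change M a - c < M a; linarith)
  -- near maximum points of the doubled problem
  have hnear : ∀ t ∈ Icc 0 T, ∀ x y : EuclideanSpace ℝ (Fin n),
      M a - 2 * c ≤ u (t, x) - v (t, y) - a / 2 * ‖x - y‖ ^ 2 →
      0 < t ∧ a * ‖x - y‖ ^ 2 < 16 * η := by
    intro t ht x y h
    have h1 := hle (a / 2) (by positivity) t ht x y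
    have h2 : a * ‖x - y‖ ^ 2 < 16 * η := by nlinarith
    refine ⟨lt_of_le_of_ne ht.1 ?_, h2⟩
    rintro rfl
    have h3 : ‖x - y‖ < d3 := by
      have : ‖x - y‖ ^ 2 < d3 ^ 2 := by nlinarith [sq_nonneg ‖x - y‖]
      exact lt_of_pow_lt_pow_left₀ 2 hd3.le this
    have h4 := hd3u (show dist x y < d3 by rwa [dist_eq_norm])
    rw [Real.dist_eq, abs_lt] at h4
    have h5 := hinit y
    have h6 := hMlo a ha
    have h7 : 0 ≤ a / 2 * ‖x - y‖ ^ 2 := by positivity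
    linarith [h4.2]
  set Bad : Set (STS n × STS n) := {z | z.1.1 ≤ 0} ∪ {z | z.2.1 ≤ 0} ∪
    {z | η1 ≤ |z.1.1 - z.2.1|} ∪ {z | 16 * η ≤ a * ‖z.1.2 - z.2.2‖ ^ 2} with hBad
  have hBadc : IsClosed Bad := by
    refine ((IsClosed.union ?_ ?_).union ?_).union ?_
    · exact isClosed_le (by fun_prop) (by fun_prop)
    · exact isClosed_le (by fun_prop) (by fun_prop)
    · exact isClosed_le (by fun_prop) (by fun_prop)
    · exact isClosed_le (by fun_prop) (by fun_prop)
  have hBadn : ∀ z, z ∉ Bad → 0 < z.1.1 ∧ 0 < z.2.1 ∧ |z.1.1 - z.2.1| < η1 ∧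
      a * ‖z.1.2 - z.2.2‖ ^ 2 < 16 * η := by
    intro z hz
    refine ⟨?_, ?_, ?_, ?_⟩
    · by_contra! h; exact hz (Or.inl (Or.inl (Or.inl h)))
    · by_contra! h; exact hz (Or.inl (Or.inl (Or.inr h)))
    · by_contra! h; exact hz (Or.inl (Or.inr h))
    · by_contra! h; exact hz (Or.inr h)
  obtain ⟨b, hb, hbB⟩ := choose_b (T := T) (g1 := u) (g2 := fun q => - v q) (m := M a - 2 * c) hub
    (fun q => by rw [abs_neg]; exact hvb q) husc hlsc.neg ha hc x1 x2 hBadc (by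
      intro t ht x y h hB
      obtain ⟨h1, h2⟩ := hnear t ht x y (by linarith)
      rcases hB with ((hB | hB) | hB) | hB
      · have hB' : t ≤ 0 := hB
        linarith
      · have hB' : t ≤ 0 := hB
        linarith
      · have hB' : η1 ≤ |t - t| := hB
        rw [sub_self, abs_zero] at hB'
        linarith
      · have hB' : 16 * η ≤ a * ‖x - y‖ ^ 2 := hB
        linarith)
  obtain ⟨q1, hq1, q2, hq2, p1, p2, X, Y, hm, hp1, hp2, hXs, hYs, hX, hY, hXY, hFF⟩ :=
    visc_pair (F := F) hT hub hvb husc hlsc hsub hsuper ha hb hc ht0 x1 x2 (m := M a - 2 * c)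
      (by linarith) (fun q1 hq1 q2 hq2 h =>
        ⟨(hBadn _ (hbB q1 hq1 q2 hq2 h)).1, (hBadn _ (hbB q1 hq1 q2 hq2 h)).2.1⟩)
  obtain ⟨hs1, hs2, hs3, hs4⟩ := hBadn _ (hbB q1 hq1 q2 hq2 hm)
  simp only at hs1 hs2 hs3 hs4
  obtain ⟨X', Y', hpsd, hXY', bX, bY, bX', bY', dX, dY⟩ := mat_fix ha hc hXs hYs hX hY hXY
  have hW := Wf_nonneg (n := n) ha.le hb.le (q1 - q2)
  have hn1 : 0 ≤ c * ‖q1.2 - x1‖ ^ 2 := by positivity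
  have hn2 : 0 ≤ c * ‖q2.2 - x2‖ ^ 2 := by positivity
  have hMa := hMlo a ha
  have huv : μ / 2 ≤ u q1 - v q2 := by linarith
  have hu1 := abs_le.mp (hub q1)
  have hv1 := abs_le.mp (hvb q2)
  have hsm : ∀ d : ℝ, 0 ≤ d → c * d ^ 2 ≤ 2 * C0 → c + 2 * c * d < min 1 η1 := by
    intro d hd h
    have : c * d ≤ √(2 * C0 * c) := by
      apply Real.le_sqrt_of_sq_le
      nlinarith
    linarith
  have hk1 := hsm _ (norm_nonneg _) (show c * ‖q1.2 - x1‖ ^ 2 ≤ 2 * C0 by linarith)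
  have hk2 := hsm _ (norm_nonneg _) (show c * ‖q2.2 - x2‖ ^ 2 ≤ 2 * C0 by linarith)
  have hp1' := hp1.trans_lt hk1
  have hp2' := hp2.trans_lt hk2
  rw [lt_min_iff] at hp1' hp2'
  have hpa : ‖a • (q1.2 - q2.2)‖ ≤ a + 16 * η := by
    rw [norm_smul, Real.norm_eq_abs, abs_of_pos ha]
    nlinarith [sq_nonneg (‖q1.2 - q2.2‖ - 1)]
  have hn : ∀ p : EuclideanSpace ℝ (Fin n), ‖p - a • (q1.2 - q2.2)‖ < 1 →
      ‖p‖ ≤ C0 + 10 * a + 16 * η + 20 := by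
    intro p hp
    have := norm_add_le (p - a • (q1.2 - q2.2)) (a • (q1.2 - q2.2))
    rw [sub_add_cancel] at this
    linarith
  have hF1 := hUC q1.1 q1.1 q1.2 q1.2 (u q1) (u q1) p1 (a • (q1.2 - q2.2)) _ X' hq1.1 hq1.1
    ((hub q1).trans (by linarith)) ((hub q1).trans (by linarith)) (hn _ hp1'.1)
    (hpa.trans (by linarith)) (fun i j => (bX i j).trans (by linarith))
    (fun i j => (bX' i j).trans (by linarith)) (by simpa using hη1p) (by simpa using hη1p)
    (by simpa using hη1p) hp1'.2 (fun i j => (dX i j).trans_lt hcη1)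
  have hF2 := hUC q2.1 q1.1 q2.2 q2.2 (v q2) (v q2) p2 (a • (q1.2 - q2.2)) _ Y' hq2.1 hq1.1
    ((hvb q2).trans (by linarith)) ((hvb q2).trans (by linarith)) (hn _ hp2'.1)
    (hpa.trans (by linarith)) (fun i j => (bY i j).trans (by linarith))
    (fun i j => (bY' i j).trans (by linarith)) (by rwa [abs_sub_comm]) (by simpa using hη1p)
    (by simpa using hη1p) hp2'.2 (fun i j => (dY i j).trans_lt hcη1)
  have hpr := hFproper q1.1 q2.2 (a • (q1.2 - q2.2)) Y' (u q1) (v q2) (by linarith)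
  have hγuv : γ * (μ / 2) ≤ γ * (u q1 - v q2) := by gcongr
  have hfin : F q1.1 q1.2 (u q1) (a • (q1.2 - q2.2)) X' -
      F q1.1 q2.2 (u q1) (a • (q1.2 - q2.2)) Y' ≤ γ * μ / 8 := by
    by_cases hxy : q1.2 = q2.2
    · have h1 := hFell q1.1 q2.2 (u q1) (a • (q1.2 - q2.2)) X' Y' hpsd
      rw [hxy] at h1 ⊢
      have : 0 < γ * μ / 8 := by positivity
      linarith
    · have h1 := hstr q1.1 hq1.1 q1.2 q2.2 (u q1) a X' Y' (hub q1) ha hXY'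
      have hpos : 0 < ‖q1.2 - q2.2‖ := norm_pos_iff.mpr (sub_ne_zero.mpr hxy)
      have h2 : ‖q1.2 - q2.2‖ < d2 / 2 := by
        have h3 : ‖q1.2 - q2.2‖ ^ 2 < (d2 / 2) ^ 2 := by nlinarith [sq_nonneg ‖q1.2 - q2.2‖]
        exact lt_of_pow_lt_pow_left₀ 2 (by positivity) h3
      have h4 := hd2θ (a * ‖q1.2 - q2.2‖ ^ 2 + ‖q1.2 - q2.2‖) (by positivity) (by linarith)
      linarith
  rw [abs_lt] at hF1 hF2
  linarith [hF1.1, hF1.2, hF2.1, hF2.2]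

/-- parabolic comparison / key estimate. Under the structural
assumptions on `F` (properness with `γ > 0`, degenerate ellipticity, the
condition (3.14) with modulus `θ_R`, and uniform continuity on sets where
`(u,p,X)` stay bounded), if `u` is a bounded USC subsolution and `v` a bounded
LSC supersolution of `∂ₜ - F = 0` on `(0,T]×ℝⁿ` with `u(0,·) ≤ v(0,·)` both
`BUC(ℝⁿ)`, then `u(t,x) - v(t,y) ≤ inf_{α>0} [α/2 |x-y|² + l(α)]` where
`l(α) → 0` as `α → ∞`. -/
theorem stmt15 (T : ℝ) (hT : 0 < T)
    (F : ℝ → EuclideanSpace ℝ (Fin n) → ℝ → EuclideanSpace ℝ (Fin n) →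
      Matrix (Fin n) (Fin n) ℝ → ℝ)
    (hFcont : Continuous (fun q : ℝ × EuclideanSpace ℝ (Fin n) × ℝ ×
      EuclideanSpace ℝ (Fin n) × Matrix (Fin n) (Fin n) ℝ =>
        F q.1 q.2.1 q.2.2.1 q.2.2.2.1 q.2.2.2.2))
    (hFell : ∀ t x r p (X Y : Matrix (Fin n) (Fin n) ℝ), (Y - X).PosSemidef →
      F t x r p X ≤ F t x r p Y)
    (γ : ℝ) (hγ : 0 < γ)
    (hFproper : ∀ t x p X r s, s ≤ r → γ * (r - s) ≤ F t x s p X - F t x r p X)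
    -- structural condition (3.14) of the User's Guide, with modulus `θ_R`:
    (hFstruct : ∀ R > (0:ℝ), ∃ θ : ℝ → ℝ, (∀ s, 0 ≤ θ s) ∧
      Tendsto θ (nhdsWithin 0 (Set.Ioi 0)) (nhds 0) ∧
      ∀ t ∈ Set.Icc 0 T, ∀ (x xt : EuclideanSpace ℝ (Fin n)) (r a : ℝ)
        (X Y : Matrix (Fin n) (Fin n) ℝ), |r| ≤ R → 0 < a →
        (∀ ξ η : Fin n → ℝ,
          -(3 * a) * ((∑ i, ξ i ^ 2) + ∑ i, η i ^ 2)
              ≤ ξ ⬝ᵥ X.mulVec ξ - η ⬝ᵥ Y.mulVec η ∧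
          ξ ⬝ᵥ X.mulVec ξ - η ⬝ᵥ Y.mulVec η ≤ 3 * a * ∑ i, (ξ i - η i) ^ 2) →
        F t x r (a • (x - xt)) X - F t xt r (a • (x - xt)) Y
          ≤ θ (a * ‖x - xt‖ ^ 2 + ‖x - xt‖))
    -- uniform continuity of `F` on sets where `(u,p,X)` remain bounded:
    (hFuc : ∀ R > (0:ℝ), ∀ δ > (0:ℝ), ∃ η > (0:ℝ), ∀ t t' x x' r r' p p'
      (X X' : Matrix (Fin n) (Fin n) ℝ),
      t ∈ Set.Icc 0 T → t' ∈ Set.Icc 0 T →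
      |r| ≤ R → |r'| ≤ R → ‖p‖ ≤ R → ‖p'‖ ≤ R →
      (∀ i j, |X i j| ≤ R) → (∀ i j, |X' i j| ≤ R) →
      |t - t'| < η → ‖x - x'‖ < η → |r - r'| < η → ‖p - p'‖ < η →
      (∀ i j, |X i j - X' i j| < η) →
      |F t x r p X - F t' x' r' p' X'| < δ)
    (u v : ℝ × EuclideanSpace ℝ (Fin n) → ℝ)
    (hub : ∃ C, ∀ p, |u p| ≤ C) (hvb : ∃ C, ∀ p, |v p| ≤ C)
    (husc : UpperSemicontinuousOn u (Set.Icc 0 T ×ˢ Set.univ))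
    (hlsc : LowerSemicontinuousOn v (Set.Icc 0 T ×ˢ Set.univ))
    -- `u` is a viscosity subsolution of `∂ₜ - F = 0` on `(0,T]×ℝⁿ`:
    (hsub : ∀ ψ : ℝ × EuclideanSpace ℝ (Fin n) → ℝ, ContDiff ℝ 2 ψ →
      ∀ t₀ ∈ Set.Ioc 0 T, ∀ x₀,
      IsLocalMaxOn (fun q => u q - ψ q) (Set.Ioc 0 T ×ˢ Set.univ) (t₀, x₀) →
      ptDeriv ψ (t₀, x₀) - F t₀ x₀ (u (t₀, x₀)) (pxGrad ψ (t₀, x₀)) (pxHess ψ (t₀, x₀)) ≤ 0)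
    -- `v` is a viscosity supersolution of `∂ₜ - F = 0` on `(0,T]×ℝⁿ`:
    (hsuper : ∀ ψ : ℝ × EuclideanSpace ℝ (Fin n) → ℝ, ContDiff ℝ 2 ψ →
      ∀ t₀ ∈ Set.Ioc 0 T, ∀ x₀,
      IsLocalMinOn (fun q => v q - ψ q) (Set.Ioc 0 T ×ˢ Set.univ) (t₀, x₀) →
      0 ≤ ptDeriv ψ (t₀, x₀) -
        F t₀ x₀ (v (t₀, x₀)) (pxGrad ψ (t₀, x₀)) (pxHess ψ (t₀, x₀)))
    (hu0 : UniformContinuous (fun x => u (0, x)))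
    (hv0 : UniformContinuous (fun x => v (0, x)))
    (hinit : ∀ x, u (0, x) ≤ v (0, x)) :
    ∃ l : ℝ → ℝ, Tendsto l atTop (nhds 0) ∧
      ∀ t ∈ Set.Icc 0 T, ∀ x y : EuclideanSpace ℝ (Fin n), ∀ α > (0:ℝ),
        u (t, x) - v (t, y) ≤ α / 2 * ‖x - y‖ ^ 2 + l α := by
  have hcore := core_est T hT F hFcont hFell γ hγ hFproper hFstruct hFuc u v hub hvb husc hlsc
    hsub hsuper hu0 hv0 hinit
  obtain ⟨Cu, hCu⟩ := hub
  obtain ⟨Cv, hCv⟩ := hvb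
  set Z : ℝ → Set ℝ := fun a => {r | ∃ t ∈ Set.Icc 0 T, ∃ x y : EuclideanSpace ℝ (Fin n),
    r = u (t, x) - v (t, y) - a / 2 * ‖x - y‖ ^ 2} with hZ
  have hbdd : ∀ a > 0, ∀ r ∈ Z a, r ≤ Cu + Cv := by
    rintro a ha r ⟨t, ht, x, y, rfl⟩
    have h1 := (abs_le.mp (hCu (t, x))).2
    have h2 := (abs_le.mp (hCv (t, y))).1
    have h3 : 0 ≤ a / 2 * ‖x - y‖ ^ 2 := by positivity
    linarith
  have hne : ∀ a, (Z a).Nonempty := fun a => ⟨_, 0, ⟨le_rfl, hT.le⟩, 0, 0, rfl⟩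
  refine ⟨fun a => max 0 (sSup (Z a)), ?_, fun t ht x y α hα => ?_⟩
  · rw [Metric.tendsto_atTop]
    intro ε hε
    obtain ⟨a, ha, h⟩ := hcore (ε / 2) (by positivity)
    refine ⟨a, fun α hα => ?_⟩
    have h1 : sSup (Z α) ≤ ε / 2 := by
      refine csSup_le (hne α) ?_
      rintro r ⟨t, ht, x, y, rfl⟩
      have h2 := h t ht x y
      have h3 : a / 2 * ‖x - y‖ ^ 2 ≤ α / 2 * ‖x - y‖ ^ 2 := by gcongr
      linarith
    rw [Real.dist_eq, sub_zero, abs_of_nonneg (le_max_left _ _)]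
    exact max_lt hε (by linarith)
  · have h1 : u (t, x) - v (t, y) - α / 2 * ‖x - y‖ ^ 2 ≤ sSup (Z α) :=
      le_csSup ⟨Cu + Cv, hbdd α hα⟩ ⟨t, ht, x, y, rfl⟩
    have h2 := le_max_right 0 (sSup (Z α))
    linarith
end
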